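/- arXiv:1711.00180 — 5 statements merged into one kernel-verified Lean document; each statement's English description precedes it below -/
import Mathlib

section
/- For all positive integers x, y, z, m, n with x > y, 1 ≤ z ≤ x − y and gcd(m, n) = 1, if φ(z·(x^m − y^m)/(x − y)) = z·(x^n − y^n)/(x − y), then z = 1, m = 1 and n = 1. -/
/-- residue of `x / y` modulo `p`; its multiplicative order. -/
noncomputable def ordp (x y p : ℕ) : ℕ := orderOf ((x : ZMod p) * (y : ZMod p)⁻¹)

lemma ratio_pow {x y p : ℕ} (hp : p.Prime) (hy : ¬ p ∣ y) (k : ℕ) :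
    ((x : ZMod p) * (y : ZMod p)⁻¹) ^ k = 1 ↔ (p : ℤ) ∣ (x : ℤ) ^ k - (y : ℤ) ^ k := by
  have := Fact.mk hp
  have hy' : (y : ZMod p) ≠ 0 := by rwa [Ne, ZMod.natCast_eq_zero_iff]
  rw [← ZMod.intCast_zmod_eq_zero_iff_dvd]
  push_cast
  rw [mul_pow, inv_pow, sub_eq_zero, mul_inv_eq_one₀ (pow_ne_zero _ hy')]

lemma ordp_dvd {x y p : ℕ} (hp : p.Prime) (hy : ¬ p ∣ y) (k : ℕ) :
    ordp x y p ∣ k ↔ (p : ℤ) ∣ (x : ℤ) ^ k - (y : ℤ) ^ k := by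
  rw [ordp, orderOf_dvd_iff_pow_eq_one, ratio_pow hp hy]

lemma ordp_dvd_pred {x y p : ℕ} (hp : p.Prime) (hx : ¬ p ∣ x) (hy : ¬ p ∣ y) :
    ordp x y p ∣ p - 1 := by
  have := Fact.mk hp
  have hy' : (y : ZMod p) ≠ 0 := by rwa [Ne, ZMod.natCast_eq_zero_iff]
  have hx' : (x : ZMod p) ≠ 0 := by rwa [Ne, ZMod.natCast_eq_zero_iff]
  exact orderOf_dvd_of_pow_eq_one (ZMod.pow_card_sub_one_eq_one (mul_ne_zero hx' (inv_ne_zero hy')))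

lemma not_dvd_of_dvd_sub {x y p k : ℕ} (hp : p.Prime) (hco : Nat.Coprime x y) (hk : 0 < k)
    (h : (p : ℤ) ∣ (x : ℤ) ^ k - (y : ℤ) ^ k) : ¬ p ∣ x ∧ ¬ p ∣ y := by
  have hp' : Prime (p : ℤ) := Nat.prime_iff_prime_int.mp hp
  have key : (p : ℤ) ∣ x ↔ (p : ℤ) ∣ y := by
    constructor
    · intro h1
      have : (p : ℤ) ∣ (y : ℤ) ^ k := by
        have := dvd_sub (dvd_pow h1 hk.ne') h
        simpa using this
      exact hp'.dvd_of_dvd_pow this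
    · intro h1
      have : (p : ℤ) ∣ (x : ℤ) ^ k := by
        have := dvd_add h (dvd_pow h1 hk.ne')
        simpa using this
      exact hp'.dvd_of_dvd_pow this
  rw [Int.natCast_dvd_natCast, Int.natCast_dvd_natCast] at key
  have : ¬ (p ∣ x ∧ p ∣ y) := fun ⟨a, b⟩ => Nat.not_coprime_of_dvd_of_dvd hp.one_lt a b hco
  tauto

open Polynomial in
lemma scale_pow (e : ℕ) (he : 0 < e) (y : ℤ) : 
    (scaleRoots (X ^ e - 1 : ℤ[X]) y) = X ^ e - C (y ^ e) := by
  have hd : natDegree (X ^ e - 1 : ℤ[X]) = e := by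
    simpa using natDegree_X_pow_sub_C (R := ℤ) (n := e) (r := 1)
  ext i
  rw [coeff_scaleRoots, hd]
  simp only [coeff_sub, coeff_X_pow, coeff_one, coeff_C]
  by_cases h : i = e
  · subst h; simp [he.ne']
  · by_cases h0 : i = 0
    · subst h0; simp [h]
    · simp [h, h0]

open Polynomial in
theorem zsig {x y e : ℕ} (hy : 0 < y) (hxy : y + 2 ≤ x) (hco : Nat.Coprime x y)
    (he : Odd e) (he1 : 1 < e) :
    ∃ p : ℕ, p.Prime ∧ ¬ p ∣ x ∧ ¬ p ∣ y ∧ ordp x y p = e := by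
  by_contra hcon
  push Not at hcon
  set H : ℤ := (scaleRoots (cyclotomic e ℤ) (y : ℤ)).eval (x : ℤ) with hH
  have hreal : ((x : ℝ) - y) ^ e.totient < (H : ℝ) := by
    have h1 := sub_one_pow_totient_lt_cyclotomic_eval (n := e) (q := (x : ℝ) / y) (by omega)
      (by rw [lt_div_iff₀ (by positivity)]; norm_cast; omega)
    have h2 := scaleRoots_eval₂_mul (p := cyclotomic e ℤ) (Int.castRingHom ℝ) ((x : ℝ) / y) (y : ℤ)
    have hy0 : (0 : ℝ) < y := by exact_mod_cast hy
    have h3 : (Int.castRingHom ℝ) (y : ℤ) * ((x : ℝ) / y) = (Int.castRingHom ℝ) (x : ℤ) := by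
      simp; field_simp
    rw [h3, eval₂_at_apply, natDegree_cyclotomic, eval₂_eq_eval_map, map_cyclotomic] at h2
    have h4 : (H : ℝ) = (y : ℝ) ^ e.totient * (cyclotomic e ℝ).eval ((x : ℝ) / y) := by
      simpa using h2
    rw [h4]
    have h5 : ((x : ℝ) - y) ^ e.totient = (y : ℝ) ^ e.totient * ((x : ℝ) / y - 1) ^ e.totient := by
      rw [← mul_pow]; congr 1; field_simp
    rw [h5]
    exact mul_lt_mul_of_pos_left h1 (by positivity)
  have hHint1 : ((x : ℤ) - y) ^ e.totient < H := by exact_mod_cast hreal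
  have h2e : (e : ℤ) < H := by
    have h1 : e ∣ 2 ^ e.totient - 1 := by
      have := Nat.ModEq.pow_totient (x := 2) (n := e) (by simpa using he)
      exact (Nat.modEq_iff_dvd' Nat.one_le_two_pow).mp this.symm
    have h2 : 2 ≤ 2 ^ e.totient := by
      have : e.totient ≠ 0 := by simp; omega
      calc 2 = 2 ^ 1 := rfl
        _ ≤ _ := Nat.pow_le_pow_right (by norm_num) (by omega)
    have h3 : e ≤ 2 ^ e.totient - 1 := Nat.le_of_dvd (by omega) h1
    have h4 : (2 : ℤ) ^ e.totient ≤ ((x : ℤ) - y) ^ e.totient :=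
      pow_le_pow_left₀ (by norm_num) (by omega) _
    have h5 : (e : ℤ) < 2 ^ e.totient := by
      have : e < 2 ^ e.totient := by omega
      exact_mod_cast this
    linarith
  have hdiv : ∀ p, p.Prime → p ∣ e → ((x : ℤ) ^ (e / p) - (y : ℤ) ^ (e / p)) * H ∣
      (x : ℤ) ^ e - (y : ℤ) ^ e := by
    intro p hp hpe
    have hpd : e / p ∈ e.properDivisors := by
      rw [Nat.mem_properDivisors]
      exact ⟨Nat.div_dvd_of_dvd hpe, Nat.div_lt_self (by omega) hp.one_lt⟩
    have h1 := X_pow_sub_one_mul_cyclotomic_dvd_X_pow_sub_one_of_dvd ℤ hpd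
    have h2 := scaleRoots_dvd _ _ (r := (y : ℤ)) h1
    have h0 : 0 < e / p := Nat.div_pos (Nat.le_of_dvd (by omega) hpe) hp.pos
    rw [mul_scaleRoots_of_noZeroDivisors, scale_pow _ h0, scale_pow _ (by omega)] at h2
    have := eval_dvd (x := (x : ℤ)) h2
    simpa using this
  have hdiv1 : H ∣ (x : ℤ) ^ e - (y : ℤ) ^ e := by
    obtain ⟨p, hp, hpe⟩ := Nat.exists_prime_and_dvd (n := e) (by omega)
    exact (dvd_mul_left _ _).trans (hdiv p hp hpe)
  -- every prime factor of `H` divides `e`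
  have hall : ∀ p : ℕ, p.Prime → (p : ℤ) ∣ H → p ∣ e := by
    intro p hp hpH
    have := Fact.mk hp
    by_contra hpe
    obtain ⟨h1, h2⟩ := not_dvd_of_dvd_sub hp hco (by omega) (hpH.trans hdiv1)
    refine hcon p hp h1 h2 ?_
    have : NeZero (e : ZMod p) := ⟨by rwa [Ne, ZMod.natCast_eq_zero_iff]⟩
    have hy' : (y : ZMod p) ≠ 0 := by rwa [Ne, ZMod.natCast_eq_zero_iff]
    have h3 := scaleRoots_eval₂_mul (p := cyclotomic e ℤ) (Int.castRingHom (ZMod p))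
      ((x : ZMod p) * (y : ZMod p)⁻¹) (y : ℤ)
    have h4 : (Int.castRingHom (ZMod p)) (y : ℤ) * ((x : ZMod p) * (y : ZMod p)⁻¹) =
        (Int.castRingHom (ZMod p)) (x : ℤ) := by
      simp; field_simp
    rw [h4, eval₂_at_apply, natDegree_cyclotomic, eval₂_eq_eval_map, map_cyclotomic] at h3
    have h5 : (H : ZMod p) = 0 := by rwa [ZMod.intCast_zmod_eq_zero_iff_dvd]
    have h6 : (cyclotomic e (ZMod p)).eval ((x : ZMod p) * (y : ZMod p)⁻¹) = 0 := by
      have h7 : (Int.castRingHom (ZMod p)) H = 0 := by simpa using h5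
      rw [← hH, h7] at h3
      have := h3.symm
      rcases mul_eq_zero.mp this with h | h
      · exact absurd h (pow_ne_zero _ (by simpa using hy'))
      · exact h
    exact (isRoot_cyclotomic_iff.mp h6).eq_orderOf.symm
  have hsq : ∀ p : ℕ, p.Prime → ¬ (p : ℤ) * p ∣ H := by
    intro p hp hpp
    have hpH : (p : ℤ) ∣ H := (dvd_mul_left _ _).trans hpp
    have hpe := hall p hp hpH
    obtain ⟨h1, h2⟩ := not_dvd_of_dvd_sub hp hco (by omega) (hpH.trans hdiv1)
    have hpo : Odd p := he.of_dvd_nat hpe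
    have hp' : Prime (p : ℤ) := Nat.prime_iff_prime_int.mp hp
    set f := e / p
    have hef : e = f * p := (Nat.div_mul_cancel hpe).symm
    set u : ℤ := (x : ℤ) ^ f
    set v : ℤ := (y : ℤ) ^ f
    have hup : (x : ℤ) ^ e - (y : ℤ) ^ e = u ^ p - v ^ p := by
      rw [hef, pow_mul, pow_mul]
    have huv : (p : ℤ) ∣ u - v := by
      have := Fact.mk hp
      have h3 : (p : ℤ) ∣ u ^ p - v ^ p := hup ▸ hpH.trans hdiv1
      rw [← ZMod.intCast_zmod_eq_zero_iff_dvd] at h3 ⊢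
      push_cast at h3 ⊢
      simpa [ZMod.pow_card] using h3
    have hxu : ¬ (p : ℤ) ∣ u := by
      intro h
      exact h1 (Int.natCast_dvd_natCast.mp (hp'.dvd_of_dvd_pow h))
    have hlte := Int.emultiplicity_pow_sub_pow hp hpo huv hxu p
    have hd := hdiv p hp hpe
    rw [hup] at hd
    have huv0 : u - v ≠ 0 := by
      intro h
      have hf0 : f ≠ 0 := by
        intro h0; rw [h0] at hef; omega
      have : (x : ℤ) ^ f = (y : ℤ) ^ f := sub_eq_zero.mp h
      have : x ^ f = y ^ f := by exact_mod_cast this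
      have := Nat.pow_left_injective hf0 this
      omega
    have hfin : FiniteMultiplicity (p : ℤ) (u - v) := Int.finiteMultiplicity_iff.mpr ⟨by simpa using hp.ne_one, huv0⟩
    have hdd : (p : ℤ) ^ (multiplicity (p : ℤ) (u - v) + 2) ∣ u ^ p - v ^ p := by
      rw [pow_add]
      refine (mul_dvd_mul (pow_multiplicity_dvd _ _) ?_).trans hd
      rwa [pow_two]
    have h3 := le_emultiplicity_of_pow_dvd hdd
    rw [hlte, hfin.emultiplicity_eq_multiplicity, 
      (Nat.finiteMultiplicity_iff.mpr ⟨hp.ne_one, hp.pos⟩ : FiniteMultiplicity p p).emultiplicity_self] at h3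
    have h4 : (multiplicity (p : ℤ) (u - v) + 2) ≤ multiplicity (p : ℤ) (u - v) + 1 := by exact_mod_cast h3
    omega
  have hHpos : 0 < H := by omega
  obtain ⟨N, hN⟩ := Int.eq_ofNat_of_zero_le hHpos.le
  rw [hN] at hall hsq h2e
  have hNs : Squarefree N := by
    rw [Nat.squarefree_iff_prime_squarefree]
    intro p hp h
    exact hsq p hp (by exact_mod_cast h)
  have hN0 : e < N := by exact_mod_cast h2e
  have : N ∣ e := by
    rw [← Nat.prod_primeFactors_of_squarefree hNs]
    refine (Finset.prod_dvd_prod_of_subset _ _ _ ?_).trans (Nat.prod_primeFactors_dvd e)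
    intro p hp
    rw [Nat.mem_primeFactors] at hp ⊢
    exact ⟨hp.1, hall p hp.1 (by exact_mod_cast hp.2.1), by omega⟩
  have := Nat.le_of_dvd (by omega) this
  omega

lemma sum_inv_le_harmonic (U : Finset ℕ) (hU : ∀ u ∈ U, 1 ≤ u) :
    ∑ u ∈ U, (1 : ℝ) / u ≤ (harmonic U.card : ℝ) := by
  induction U using Finset.induction_on_max with
  | empty => simp
  | insert a s hs ih =>
    have ha : a ∉ s := fun h => lt_irrefl _ (hs a h)
    rw [Finset.sum_insert ha, Finset.card_insert_of_notMem ha, harmonic_succ]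
    have h1 := ih (fun u hu => hU u (Finset.mem_insert_of_mem hu))
    have h2 : s.card + 1 ≤ a := by
      have hsub : s ⊆ Finset.Ico 1 a := by
        intro u hu
        rw [Finset.mem_Ico]
        exact ⟨hU u (Finset.mem_insert_of_mem hu), hs u hu⟩
      have := Finset.card_le_card hsub
      have ha1 := hU a (Finset.mem_insert_self _ _)
      simp at this
      omega
    have h3 : (1 : ℝ) / a ≤ ((s.card + 1 : ℕ) : ℝ)⁻¹ := by
      rw [one_div]
      apply inv_anti₀ (by positivity)
      exact_mod_cast h2
    push_cast at h3 ⊢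
    linarith

lemma sum_inv_pred_le (T : Finset ℕ) (q : ℕ) (hq : 0 < q)
    (hT : ∀ p ∈ T, 1 < p ∧ 2 * q ∣ p - 1) :
    ∑ p ∈ T, (1 : ℝ) / ((p : ℝ) - 1) ≤ (harmonic T.card : ℝ) / (2 * q) := by
  have hinj : Set.InjOn (fun p => (p - 1) / (2 * q)) (T : Set ℕ) := by
    intro a ha b hb hab
    obtain ⟨a1, c, hc⟩ := hT a ha
    obtain ⟨b1, d, hd⟩ := hT b hb
    simp only [hc, hd] at hab
    rw [Nat.mul_div_cancel_left _ (by omega), Nat.mul_div_cancel_left _ (by omega)] at hab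
    subst hab
    omega
  have h := sum_inv_le_harmonic (T.image (fun p => (p - 1) / (2 * q))) (by
    intro u hu
    rw [Finset.mem_image] at hu
    obtain ⟨p, hp, rfl⟩ := hu
    obtain ⟨p1, hd⟩ := hT p hp
    exact Nat.div_pos (Nat.le_of_dvd (by omega) hd) (by omega))
  rw [Finset.sum_image hinj, Finset.card_image_of_injOn hinj] at h
  have hq' : (0 : ℝ) < q := by exact_mod_cast hq
  rw [le_div_iff₀ (by positivity), Finset.sum_mul]
  refine le_trans (le_of_eq ?_) h
  apply Finset.sum_congr rfl
  intro p hp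
  obtain ⟨p1, c, hc⟩ := hT p hp
  rw [hc, Nat.mul_div_cancel_left _ (by omega)]
  have : (p : ℝ) - 1 = 2 * q * c := by
    have : p = 2 * q * c + 1 := by omega
    rw [this]; push_cast; ring
  rw [this]
  have hc0 : (c : ℝ) ≠ 0 := by
    rintro h0
    have : c = 0 := by exact_mod_cast h0
    subst this; omega
  field_simp

lemma c_bound (k w : ℕ) (hk : 2 ≤ k) (hw : 2 ^ w ≤ 2 * k) :
    (w : ℝ) * (harmonic k : ℝ) ≤ (6 * k + 1) / 4 := by
  have hpos : (0 : ℝ) ≤ (harmonic k : ℝ) := by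
    exact_mod_cast (harmonic_pos (by omega)).le
  by_cases hk32 : k < 32
  · have hh : ∃ j : ℕ, w ≤ j ∧ (j : ℝ) * (harmonic k : ℝ) ≤ (6 * k + 1) / 4 := by
      have hwb : ∀ j, 2 * k < 2 ^ (j + 1) → w ≤ j := by
        intro j hj
        have := (Nat.pow_lt_pow_iff_right (a := 2) (by norm_num)).mp (lt_of_le_of_lt hw hj)
        omega
      by_cases h1 : k < 4
      · refine ⟨2, hwb 2 (by norm_num; omega), ?_⟩
        interval_cases k <;> norm_num [harmonic, Finset.sum_range_succ]
      by_cases h1 : k < 8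
      · refine ⟨3, hwb 3 (by norm_num; omega), ?_⟩
        interval_cases k <;> norm_num [harmonic, Finset.sum_range_succ]
      by_cases h1 : k < 16
      · refine ⟨4, hwb 4 (by norm_num; omega), ?_⟩
        interval_cases k <;> norm_num [harmonic, Finset.sum_range_succ]
      · refine ⟨5, hwb 5 (by norm_num; omega), ?_⟩
        interval_cases k <;> norm_num [harmonic, Finset.sum_range_succ]
    obtain ⟨j, hj, hh⟩ := hh
    have : (w : ℝ) ≤ j := by exact_mod_cast hj
    nlinarith
  · set j := Nat.log 2 k with hj
    have h1 : 2 ^ j ≤ k := Nat.pow_log_le_self 2 (by omega)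
    have h2 : k < 2 ^ (j + 1) := Nat.lt_pow_succ_log_self (by norm_num) k
    have h3 : 5 ≤ j := by
      have : 2 ^ 5 < 2 ^ (j + 1) := by omega
      have := (Nat.pow_lt_pow_iff_right (a := 2) (by norm_num)).mp this
      omega
    have h4 : w ≤ j + 1 := by
      have : 2 ^ w < 2 ^ (j + 2) := by rw [pow_succ]; omega
      have := (Nat.pow_lt_pow_iff_right (a := 2) (by norm_num)).mp this
      omega
    have h5 : (harmonic k : ℝ) ≤ j + 1 := by
      have ha := harmonic_le_one_add_log k
      have hb : Real.log k ≤ (j + 1) * Real.log 2 := by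
        have : Real.log k ≤ Real.log (2 ^ (j + 1)) := by
          apply Real.log_le_log
          · have : 0 < k := by omega
            exact_mod_cast this
          · exact_mod_cast h2.le
        rw [Real.log_pow] at this
        push_cast at this
        exact this
      have hc := Real.log_two_lt_d9
      have hd : (5 : ℝ) ≤ j := by exact_mod_cast h3
      nlinarith
    have h6 : ∀ i : ℕ, 5 ≤ i → 4 * (i + 1) ^ 2 ≤ 6 * 2 ^ i := by
      intro i hi
      induction i, hi using Nat.le_induction with
      | base => norm_num
      | succ i hi ih => rw [pow_succ 2]; nlinarith
    have h7 : 4 * (j + 1) ^ 2 ≤ 6 * k := (h6 j h3).trans (by omega)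
    have h8 : (4 : ℝ) * (j + 1) ^ 2 ≤ 6 * k := by exact_mod_cast h7
    have h9 : (w : ℝ) ≤ j + 1 := by exact_mod_cast h4
    have : (w : ℝ) * (harmonic k : ℝ) ≤ (j + 1) * (j + 1) :=
      mul_le_mul h9 h5 hpos (by positivity)
    nlinarith

lemma log_cmp {a b i j : ℕ} (ha : 0 < a) (h : a ^ i ≤ b ^ j) :
    (i : ℝ) * Real.log a ≤ j * Real.log b := by
  rw [← Real.log_pow, ← Real.log_pow]
  apply Real.log_le_log (by positivity)
  exact_mod_cast h

lemma num_bound {X q k w : ℕ} (hX : 3 ≤ X) (hq : q.Prime) (hq2 : q ≠ 2) (hk : 1 ≤ k)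
    (hw : 2 ^ w ≤ 2 * k) (h : 2 * q ^ k ≤ X ^ ((q + 1) / 2)) :
    (w : ℝ) * ((harmonic k : ℝ) / (2 * q)) ≤ (3 * Real.log X - 2 * Real.log 3) / 5 := by
  have l2a := Real.log_two_gt_d9
  have l2b := Real.log_two_lt_d9
  have l3a := log_cmp (a := 2) (b := 3) (i := 19) (j := 12) (by norm_num) (by norm_num)
  have l3b := log_cmp (a := 3) (b := 2) (i := 17) (j := 27) (by norm_num) (by norm_num)
  have l5a := log_cmp (a := 2) (b := 5) (i := 23) (j := 10) (by norm_num) (by norm_num)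
  have l7a := log_cmp (a := 2) (b := 7) (i := 14) (j := 5) (by norm_num) (by norm_num)
  have l11a := log_cmp (a := 2) (b := 11) (i := 17) (j := 5) (by norm_num) (by norm_num)
  have lX := log_cmp (a := 3) (b := X) (i := 1) (j := 1) (by norm_num) (by simpa using hX)
  norm_num at l3a l3b l5a l7a l11a lX
  have hq3 : 3 ≤ q := by
    have := hq.two_le
    omega
  have hqpos : (0 : ℝ) < q := by positivity
  rw [← mul_div_assoc, div_le_iff₀ (by positivity)]
  set c : ℝ := (w : ℝ) * (harmonic k : ℝ) with hc
  set L := Real.log X with hL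
  rcases Nat.lt_or_ge k 2 with hk2 | hk2
  · have hk1 : k = 1 := by omega
    subst hk1
    have hw1 : w ≤ 1 := by
      have : 2 ^ w ≤ 2 ^ 1 := by simpa using hw
      exact (Nat.pow_le_pow_iff_right (a := 2) (by norm_num)).mp this
    have hc1 : c ≤ 1 := by
      rw [hc]
      have : (w : ℝ) ≤ 1 := by exact_mod_cast hw1
      simpa [harmonic] using this
    have : (3 : ℝ) ≤ q := by exact_mod_cast hq3
    nlinarith
  have hcb := c_bound k w hk2 hw
  rw [← hc] at hcb
  have hodd : ∃ t, q = 2 * t + 1 := hq.odd_of_ne_two hq2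
  have hmain : Real.log 2 + k * Real.log q ≤ ((q : ℝ) + 1) / 2 * L := by
    obtain ⟨t, ht⟩ := hodd
    have e1 : (q + 1) / 2 = t + 1 := by omega
    rw [e1] at h
    have h1 : Real.log ((2 * q ^ k : ℕ) : ℝ) ≤ Real.log ((X ^ (t + 1) : ℕ) : ℝ) :=
      Real.log_le_log (by positivity) (by exact_mod_cast h)
    push_cast at h1
    rw [Real.log_mul (by norm_num) (by positivity), Real.log_pow, Real.log_pow] at h1
    have e2 : ((q : ℝ) + 1) / 2 = ((t + 1 : ℕ) : ℝ) := by rw [ht]; push_cast; ring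
    rw [e2]; exact h1
  have hk2' : (2 : ℝ) ≤ k := by exact_mod_cast hk2
  have hcases : q = 3 ∨ q = 5 ∨ q = 7 ∨ 11 ≤ q := by
    by_contra hcon
    push Not at hcon
    obtain ⟨h3, h5, h7, h11⟩ := hcon
    interval_cases q <;> first | omega | (revert hq; norm_num)
  rcases hcases with rfl | rfl | rfl | h11
  · push_cast at *
    rcases Nat.lt_or_ge k 4 with hk4 | hk4
    · have hw2 : w ≤ 2 := by
        have : 2 ^ w < 2 ^ 3 := by omega
        have := (Nat.pow_lt_pow_iff_right (a := 2) (by norm_num)).mp this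
        omega
      have hw2' : (w : ℝ) ≤ 2 := by exact_mod_cast hw2
      interval_cases k
      · have hX5 : 5 ≤ X := by
          by_contra hlt
          have : X ≤ 4 := by omega
          have : X ^ 2 ≤ 4 ^ 2 := Nat.pow_le_pow_left this 2
          norm_num at h
          omega
        have lX5 := log_cmp (a := 5) (b := X) (i := 1) (j := 1) (by norm_num) (by simpa using hX5)
        norm_num at lX5
        have : c ≤ 3 := by
          rw [hc]; norm_num [harmonic, Finset.sum_range_succ]; linarith
        linarith
      · have : c ≤ 11 / 3 := by
          rw [hc]; norm_num [harmonic, Finset.sum_range_succ]; linarith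
        linarith
    · have hk4' : (4 : ℝ) ≤ k := by exact_mod_cast hk4
      nlinarith
  · push_cast at *
    nlinarith
  · push_cast at *
    nlinarith
  · have h11' : (11 : ℝ) ≤ q := by exact_mod_cast h11
    have hlq : Real.log 11 ≤ Real.log q := Real.log_le_log (by norm_num) h11'
    have hkq : (k : ℝ) * (9 / 4) ≤ (q + 1) / 2 * L := by nlinarith
    have : 0 < L := by linarith
    have h3 : (k : ℝ) ≤ 8 / 33 * (q * L) := by nlinarith
    have h4 : 10 ≤ q * L := by nlinarith
    have h5 : q * Real.log 3 ≤ q * L := by nlinarith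
    nlinarith

lemma F_bound (N : ℕ) (hN : 0 < N) :
    5 * ∑ p ∈ N.primeFactors, Real.log ((p : ℝ) / (p - 1)) ≤ Real.log (81 / 2 * N) := by
  have hterm : ∀ p ∈ N.primeFactors, 5 * Real.log ((p : ℝ) / (p - 1)) ≤
      Real.log p + ((if p = 2 then Real.log 16 else 0) + if p = 3 then Real.log (81 / 32) else 0) := by
    intro p hp
    have hpp := Nat.prime_of_mem_primeFactors hp
    have hp2 : (2 : ℝ) ≤ p := by exact_mod_cast hpp.two_le
    rw [show (5 : ℝ) * Real.log ((p : ℝ) / (p - 1)) = Real.log (((p : ℝ) / (p - 1)) ^ 5) by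
      rw [Real.log_pow]; norm_num]
    by_cases h2 : p = 2
    · subst h2
      simp only [if_true]
      norm_num
      rw [← Real.log_mul (by norm_num) (by norm_num)]
      norm_num
    by_cases h3 : p = 3
    · subst h3
      norm_num
      rw [← Real.log_mul (by norm_num) (by norm_num)]
      norm_num
    simp only [h2, h3, if_false, add_zero]
    have hp5 : 5 ≤ p := by
      have := hpp.two_le
      by_contra hlt
      have : p = 4 := by omega
      subst this
      revert hpp; norm_num
    have hp5' : (5 : ℝ) ≤ p := by exact_mod_cast hp5
    apply Real.log_le_log
    · have : (0 : ℝ) < p - 1 := by linarith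
      positivity
    · have h1 : (p : ℝ) / (p - 1) ≤ 5 / 4 := by
        rw [div_le_div_iff₀ (by linarith) (by norm_num)]; linarith
      have h0 : 0 ≤ (p : ℝ) / (p - 1) := div_nonneg (by linarith) (by linarith)
      calc ((p : ℝ) / (p - 1)) ^ 5 ≤ (5 / 4) ^ 5 := pow_le_pow_left₀ h0 h1 5
        _ ≤ 5 := by norm_num
        _ ≤ p := hp5'
  rw [Finset.mul_sum]
  refine (Finset.sum_le_sum hterm).trans ?_
  rw [Finset.sum_add_distrib, Finset.sum_add_distrib, Finset.sum_ite_eq', Finset.sum_ite_eq']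
  have h16 : 0 ≤ Real.log 16 := Real.log_nonneg (by norm_num)
  have h81 : 0 ≤ Real.log (81 / 32) := Real.log_nonneg (by norm_num)
  have e1 : (if 2 ∈ N.primeFactors then Real.log 16 else 0) ≤ Real.log 16 := by
    split_ifs <;> linarith
  have e2 : (if 3 ∈ N.primeFactors then Real.log (81 / 32) else 0) ≤ Real.log (81 / 32) := by
    split_ifs <;> linarith
  have e3 : ∑ p ∈ N.primeFactors, Real.log p ≤ Real.log N := by
    rw [← Real.log_prod (fun p hp => by
      have := (Nat.prime_of_mem_primeFactors hp).pos
      positivity)]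
    have hle := Nat.le_of_dvd hN (Nat.prod_primeFactors_dvd N)
    apply Real.log_le_log
    · apply Finset.prod_pos
      intro p hp
      have := (Nat.prime_of_mem_primeFactors hp).pos
      positivity
    · have h9 : ((∏ p ∈ N.primeFactors, p : ℕ) : ℝ) ≤ N := Nat.cast_le.mpr hle
      rwa [Nat.cast_prod] at h9
  have e4 : Real.log (81 / 2 * N) = Real.log 16 + Real.log (81 / 32) + Real.log N := by
    rw [← Real.log_mul (by norm_num) (by norm_num), ← Real.log_mul (by norm_num) (by positivity)]
    norm_num
  linarith

/-- The homogeneous geometric sum `(x ^ n - y ^ n) / (x - y)`. -/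
def gs (x y n : ℕ) : ℕ := ∑ i ∈ Finset.range n, x ^ i * y ^ (n - 1 - i)

lemma gs_mul_int (x y n : ℕ) : (gs x y n : ℤ) * ((x : ℤ) - y) = (x : ℤ) ^ n - (y : ℤ) ^ n := by
  unfold gs
  push_cast
  exact geom_sum₂_mul (x : ℤ) (y : ℤ) n

lemma gs_pos {x y n : ℕ} (hx : 0 < x) (hn : 0 < n) (hy : 0 < y) : 0 < gs x y n := by
  unfold gs
  apply Finset.sum_pos
  · intro i _; positivity
  · exact ⟨0, by simpa using hn⟩

lemma gs_one (x y : ℕ) : gs x y 1 = 1 := by simp [gs]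

lemma gs_comp {x y g k : ℕ} (hxy : y < x) :
    gs x y (g * k) = gs x y g * gs (x ^ g) (y ^ g) k := by
  have h1 := gs_mul_int x y (g * k)
  have h2 := gs_mul_int x y g
  have h3 := gs_mul_int (x ^ g) (y ^ g) k
  have hne : (x : ℤ) - y ≠ 0 := by omega
  have : (gs x y (g * k) : ℤ) = gs x y g * gs (x ^ g) (y ^ g) k := by
    apply mul_right_cancel₀ hne
    push_cast at h3
    rw [h1, mul_right_comm, h2, mul_comm ((x : ℤ) ^ g - (y : ℤ) ^ g), h3, pow_mul, pow_mul]
  exact_mod_cast this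

lemma gs_mod {x y n q : ℕ} (hq : q.Prime) (h : (q : ℤ) ∣ (x : ℤ) - y) :
    q ∣ gs x y n ↔ q ∣ n * x ^ (n - 1) := by
  have := Fact.mk hq
  rw [← ZMod.natCast_eq_zero_iff, ← ZMod.natCast_eq_zero_iff]
  have hxy : (x : ZMod q) = y := by
    rw [← ZMod.intCast_zmod_eq_zero_iff_dvd] at h
    push_cast at h
    exact sub_eq_zero.mp h
  have : ((gs x y n : ℕ) : ZMod q) = ((n * x ^ (n - 1) : ℕ) : ZMod q) := by
    unfold gs
    push_cast
    rw [← hxy]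
    rw [Finset.sum_congr rfl (g := fun _ => (x : ZMod q) ^ (n - 1))]
    · simp
    · intro i hi
      rw [Finset.mem_range] at hi
      rw [← pow_add]
      congr 1
      omega
  rw [this]

lemma gs_dvd_int (x y n : ℕ) {p : ℕ} (h : p ∣ gs x y n) :
    (p : ℤ) ∣ (x : ℤ) ^ n - (y : ℤ) ^ n := by
  rw [← gs_mul_int]
  exact Dvd.dvd.mul_right (by exact_mod_cast h) _

lemma half_dvd {x y n q b : ℕ} (hxy : y < x) (hco : Nat.Coprime x y) 
    (hq : q.Prime) (hq2 : q ≠ 2) (hn : Even n) (hn0 : 0 < n) (hqn : ¬ q ∣ n)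
    (hb : q ^ b ∣ gs x y n) :
    ∃ h, 1 ≤ h ∧ h + 1 ≤ (q + 1) / 2 ∧ (q ^ b ∣ gs x y h ∨ q ^ b ∣ x ^ h + y ^ h) := by
  have hqo : Odd q := hq.odd_of_ne_two hq2
  have hq3 : 3 ≤ q := by have := hq.two_le; omega
  rcases Nat.eq_zero_or_pos b with rfl | hbpos
  · exact ⟨1, le_refl _, by omega, Or.inl (by simp)⟩
  have hqgs : q ∣ gs x y n := (dvd_pow_self q hbpos.ne').trans hb
  have hqd := gs_dvd_int x y n hqgs
  obtain ⟨hqx, hqy⟩ := not_dvd_of_dvd_sub hq hco hn0 hqd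
  set g := Nat.gcd n (q - 1) with hg
  have hg2 : 2 ∣ g := Nat.dvd_gcd hn.two_dvd (by obtain ⟨t, ht⟩ := hqo; omega)
  obtain ⟨h, hh⟩ := hg2
  have hgpos : 0 < g := Nat.gcd_pos_of_pos_left _ hn0
  have hgle : g ≤ q - 1 := Nat.le_of_dvd (by omega) (Nat.gcd_dvd_right _ _)
  obtain ⟨k, hk⟩ : g ∣ n := Nat.gcd_dvd_left _ _
  have hqg : (q : ℤ) ∣ (x : ℤ) ^ g - (y : ℤ) ^ g := by
    rw [← ordp_dvd hq hqy]
    exact Nat.dvd_gcd ((ordp_dvd hq hqy n).mpr hqd) (ordp_dvd_pred hq hqx hqy)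
  have hcop1 : Nat.Coprime (q ^ b) (gs (x ^ g) (y ^ g) k) := by
    apply Nat.Coprime.pow_left
    rw [hq.coprime_iff_not_dvd, gs_mod hq (by push_cast; exact hqg), hq.dvd_mul]
    rintro (h1 | h1)
    · exact hqn (hk ▸ h1.mul_left g)
    · exact hqx (hq.dvd_of_dvd_pow (hq.dvd_of_dvd_pow h1))
  rw [hk, gs_comp hxy] at hb
  have hb2 : q ^ b ∣ gs x y g := hcop1.dvd_of_dvd_mul_right hb
  have hh0 : 0 < h := by omega
  have hgs2 : gs x y g = gs x y h * (x ^ h + y ^ h) := by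
    rw [hh, mul_comm, gs_comp hxy]
    congr 1
    simp [gs, Finset.sum_range_succ]
    ring
  rw [hgs2] at hb2
  refine ⟨h, hh0, by omega, ?_⟩
  by_cases hc : q ∣ x ^ h + y ^ h
  · right
    have : ¬ q ∣ gs x y h := by
      intro h1
      have h2 := gs_dvd_int x y h h1
      have h3 : (q : ℤ) ∣ (x : ℤ) ^ h + (y : ℤ) ^ h := by exact_mod_cast hc
      have h4 := dvd_add h2 h3
      have h5 : (q : ℤ) ∣ ((2 * x ^ h : ℕ) : ℤ) := by
        push_cast
        have e : 2 * (x : ℤ) ^ h = (x : ℤ) ^ h - (y : ℤ) ^ h + ((x : ℤ) ^ h + (y : ℤ) ^ h) := by ring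
        rw [e]
        exact h4
      rw [Int.natCast_dvd_natCast, hq.dvd_mul] at h5
      rcases h5 with h5 | h5
      · exact hq2 ((Nat.prime_dvd_prime_iff_eq hq Nat.prime_two).mp h5)
      · exact hqx (hq.dvd_of_dvd_pow h5)
    exact (Nat.Coprime.pow_left b (hq.coprime_iff_not_dvd.mpr this)).dvd_of_dvd_mul_left hb2
  · left
    exact (Nat.Coprime.pow_left b (hq.coprime_iff_not_dvd.mpr hc)).dvd_of_dvd_mul_right hb2

lemma val_bound {x y z d n q k : ℕ} (hy : 0 < y) (hxy : y < x) (hxo : Odd x) (hyo : Odd y)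
    (hco : Nat.Coprime x y) (hd : 0 < d) (hz : 0 < z) (hzd : z ≤ d * (x - y))
    (hq : q.Prime) (hq2 : q ≠ 2) (hn : Even n) (hn0 : 0 < n) (hqn : ¬ q ∣ n)
    (hk : q ^ k ∣ z * gs x y n) : 2 * q ^ k ≤ (d * x) ^ ((q + 1) / 2) := by
  obtain ⟨u, v, hu, hv, huv⟩ := (Nat.dvd_mul).mp hk
  obtain ⟨b, -, rfl⟩ := (Nat.dvd_prime_pow hq).mp (Dvd.intro_left u huv)
  obtain ⟨h, h1, h2, h3⟩ := half_dvd hxy hco hq hq2 hn hn0 hqn hv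
  have hx3 : 3 ≤ x := by
    obtain ⟨s, hs⟩ := hxo
    omega
  have hu' : u ≤ d * (x - y) := (Nat.le_of_dvd hz hu).trans hzd
  have hmono : (d * x) ^ (h + 1) ≤ (d * x) ^ ((q + 1) / 2) :=
    Nat.pow_le_pow_right (by positivity) h2
  refine le_trans ?_ hmono
  have hdd : d ≤ d ^ (h + 1) := Nat.le_self_pow (by omega) d
  have key : (x - y) * (2 * q ^ b) ≤ x ^ (h + 1) := by
    rcases h3 with h3 | h3
    · have h4 : q ^ b ≤ gs x y h := Nat.le_of_dvd (gs_pos (by omega) h1 hy) h3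
      have h5 : (x - y) * gs x y h ≤ x ^ h := by
        have := gs_mul_int x y h
        zify [hxy.le]
        have : (0 : ℤ) ≤ (y : ℤ) ^ h := by positivity
        linarith
      have h6 : 2 * x ^ h ≤ x ^ (h + 1) := by
        rw [pow_succ]
        have := Nat.zero_le (x ^ h)
        nlinarith
      calc (x - y) * (2 * q ^ b) = 2 * ((x - y) * q ^ b) := by ring
        _ ≤ 2 * ((x - y) * gs x y h) := by gcongr
        _ ≤ 2 * x ^ h := by gcongr
        _ ≤ _ := h6
    · have h4 : 2 ∣ x ^ h + y ^ h := (hxo.pow.add_odd hyo.pow).two_dvd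
      have h5 : Nat.Coprime 2 (q ^ b) :=
        Nat.Coprime.pow_right b ((Nat.coprime_primes Nat.prime_two hq).mpr (Ne.symm hq2))
      have h6 : 2 * q ^ b ∣ x ^ h + y ^ h := h5.mul_dvd_of_dvd_of_dvd h4 h3
      have h7 : 2 * q ^ b ≤ x ^ h + y ^ h := Nat.le_of_dvd (by positivity) h6
      have h8 : (x - y) * (x ^ h + y ^ h) ≤ x ^ (h + 1) := by
        obtain ⟨j, rfl⟩ : ∃ j, h = j + 1 := ⟨h - 1, by omega⟩
        obtain ⟨t, rfl⟩ : ∃ t, x = y + t := ⟨x - y, by omega⟩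
        have h9 : y ^ j ≤ (y + t) ^ j := Nat.pow_le_pow_left (by omega) j
        have h10 : y + t - y = t := by omega
        rw [h10, pow_succ (y + t) (j + 1), pow_succ (y + t) j, pow_succ y j]
        have : t * (y ^ j * y) ≤ t * ((y + t) ^ j * y) := by gcongr
        have h11 : y * t * y ^ j ≤ y * ((y + t) ^ j * (y + t)) := by
          have : t * y ^ j ≤ (y + t) ^ j * (y + t) := by
            rw [mul_comm]; gcongr; omega
          nlinarith
        nlinarith
      calc (x - y) * (2 * q ^ b) ≤ (x - y) * (x ^ h + y ^ h) := by gcongr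
        _ ≤ _ := h8
  calc 2 * q ^ k = u * (2 * q ^ b) := by rw [← huv]; ring
    _ ≤ d * (x - y) * (2 * q ^ b) := by gcongr
    _ = d * ((x - y) * (2 * q ^ b)) := by ring
    _ ≤ d ^ (h + 1) * x ^ (h + 1) := by gcongr
    _ = _ := by rw [mul_pow]

/-- Primes dividing `gs x y m` at which the order of `x / y` is divisible by `q`. -/
noncomputable def TT (x y m q : ℕ) : Finset ℕ :=
  (gs x y m).primeFactors.filter (fun p => q ∣ ordp x y p)

lemma TT_count {x y m q : ℕ} (hy : 0 < y) (hxy : y + 2 ≤ x) (hco : Nat.Coprime x y)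
    (hm : Odd m) (hq : q ∈ m.primeFactors) :
    2 ^ m.primeFactors.card ≤ 2 * (TT x y m q).card := by
  have hqp := Nat.prime_of_mem_primeFactors hq
  have hm0 : 0 < m := hm.pos
  have hsurj : Set.SurjOn (fun p => (ordp x y p).primeFactors.erase q) (TT x y m q : Set ℕ)
      ((m.primeFactors.erase q).powerset : Set (Finset ℕ)) := by
    intro s hs
    rw [Finset.mem_coe, Finset.mem_powerset] at hs
    have hqs : q ∉ s := fun h => Finset.notMem_erase q _ (hs h)
    have hsub : insert q s ⊆ m.primeFactors := by
      intro p hp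
      rcases Finset.mem_insert.mp hp with rfl | hp
      · exact hq
      · exact Finset.mem_of_mem_erase (hs hp)
    set e := ∏ p ∈ insert q s, p with he
    have hem : e ∣ m := (Finset.prod_dvd_prod_of_subset _ _ _ hsub).trans (Nat.prod_primeFactors_dvd m)
    have heq : q ∣ e := Finset.dvd_prod_of_mem (fun p => p) (Finset.mem_insert_self q s)
    have hpf : e.primeFactors = insert q s :=
      Nat.primeFactors_prod (fun p hp => Nat.prime_of_mem_primeFactors (hsub hp))
    have heo : Odd e := hm.of_dvd_nat hem
    have he1 : 1 < e := lt_of_lt_of_le hqp.one_lt (Nat.le_of_dvd heo.pos heq)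
    obtain ⟨p, hp, hpx, hpy, hpe⟩ := zsig hy hxy hco heo he1
    refine ⟨p, ?_, ?_⟩
    · rw [Finset.mem_coe, TT, Finset.mem_filter, Nat.mem_primeFactors, hpe]
      refine ⟨⟨hp, ?_, (gs_pos (by omega) hm0 hy).ne'⟩, heq⟩
      have h1 : (p : ℤ) ∣ (x : ℤ) ^ m - (y : ℤ) ^ m := (ordp_dvd hp hpy m).mp (hpe ▸ hem)
      have h2 : ¬ (p : ℤ) ∣ (x : ℤ) - y := by
        intro h
        have : ordp x y p ∣ 1 := (ordp_dvd hp hpy 1).mpr (by simpa using h)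
        rw [hpe, Nat.dvd_one] at this
        omega
      rw [← gs_mul_int] at h1
      have := ((Nat.prime_iff_prime_int.mp hp).dvd_or_dvd h1).resolve_right h2
      exact_mod_cast this
    · simp only [hpe, hpf]
      exact Finset.erase_insert hqs
  have h := Finset.card_le_card_of_surjOn _ hsurj
  rw [Finset.card_powerset, Finset.card_erase_of_mem hq] at h
  have hpos : 0 < m.primeFactors.card := Finset.card_pos.mpr ⟨q, hq⟩
  calc 2 ^ m.primeFactors.card = 2 * 2 ^ (m.primeFactors.card - 1) := by
        rw [← pow_succ']; congr 1; omega
    _ ≤ _ := by gcongr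

theorem main_case {x y z d m n : ℕ} (hy : 0 < y) (hxy : y < x) (hxo : Odd x) (hyo : Odd y)
    (hco : Nat.Coprime x y) (hd : 0 < d) (hz : 0 < z) (hzd : z ≤ d * (x - y))
    (hm : Odd m) (hn : Even n) (hn0 : 0 < n) (hgcd : Nat.gcd m n = 1)
    (hdvd : ∏ p ∈ (z * d * gs x y m).primeFactors, (p - 1) ∣ z * gs x y n)
    (hR : d * x * ∏ p ∈ (z * d * gs x y m).primeFactors, (p - 1) <
      ∏ p ∈ (z * d * gs x y m).primeFactors, p) : False := by
  have hm0 : 0 < m := hm.pos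
  have hxy2 : y + 2 ≤ x := by
    obtain ⟨a, ha⟩ := hxo
    obtain ⟨b, hb⟩ := hyo
    omega
  have hgm : 0 < gs x y m := gs_pos (by omega) hm0 hy
  have hgn : 0 < gs x y n := gs_pos (by omega) hn0 hy
  set P := (z * d * gs x y m).primeFactors with hP
  have hA0 : z * d * gs x y m ≠ 0 := by positivity
  have hTP : ∀ q, TT x y m q ⊆ P := by
    intro q p hp
    rw [TT, Finset.mem_filter, Nat.mem_primeFactors] at hp
    rw [hP, Nat.mem_primeFactors]
    exact ⟨hp.1.1, hp.1.2.1.mul_left _, hA0⟩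
  have hgmo : ¬ 2 ∣ gs x y m := by
    rw [gs_mod Nat.prime_two (by
      obtain ⟨a, ha⟩ := hxo
      obtain ⟨b, hb⟩ := hyo
      push_cast; omega)]
    rw [← even_iff_two_dvd, Nat.not_even_iff_odd]
    exact hm.mul hxo.pow
  -- basic facts on elements of `TT`
  have hTfact : ∀ q ∈ m.primeFactors, ∀ p ∈ TT x y m q, 1 < p ∧ 2 * q ∣ p - 1 := by
    intro q hq p hp
    rw [TT, Finset.mem_filter, Nat.mem_primeFactors] at hp
    obtain ⟨⟨hpp, hpg, -⟩, hqo⟩ := hp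
    obtain ⟨hpx, hpy⟩ := not_dvd_of_dvd_sub hpp hco hm0 (gs_dvd_int x y m hpg)
    refine ⟨hpp.one_lt, ?_⟩
    have hp2 : p ≠ 2 := by rintro rfl; exact hgmo hpg
    obtain ⟨t, ht⟩ := hpp.odd_of_ne_two hp2
    have hq2 : Odd q := hm.of_dvd_nat (Nat.dvd_of_mem_primeFactors hq)
    refine Nat.Coprime.mul_dvd_of_dvd_of_dvd ?_ ⟨t, by omega⟩ (hqo.trans (ordp_dvd_pred hpp hpx hpy))
    simpa using hq2
  have hqT : ∀ q ∈ m.primeFactors, q ^ (TT x y m q).card ∣ z * gs x y n := by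
    intro q hq
    refine Dvd.dvd.trans ?_ ((Finset.prod_dvd_prod_of_subset _ _ _ (hTP q)).trans hdvd)
    rw [← Finset.prod_const]
    apply Finset.prod_dvd_prod_of_dvd
    intro p hp
    exact (dvd_mul_left q 2).trans (hTfact q hq p hp).2
  have hcnt : ∀ q ∈ m.primeFactors, 2 ^ m.primeFactors.card ≤ 2 * (TT x y m q).card :=
    fun q hq => TT_count hy hxy2 hco hm hq
  have hcnt1 : ∀ q ∈ m.primeFactors, 1 ≤ (TT x y m q).card := by
    intro q hq
    have h1 := hcnt q hq
    have h2 : 0 < 2 ^ m.primeFactors.card := by positivity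
    omega
  have hqn : ∀ q ∈ m.primeFactors, ¬ q ∣ n := by
    intro q hq h
    have := Nat.dvd_gcd (Nat.dvd_of_mem_primeFactors hq) h
    rw [hgcd, Nat.dvd_one] at this
    exact (Nat.prime_of_mem_primeFactors hq).ne_one this
  have hcover : ∀ p ∈ P, p ∈ (z * d).primeFactors ∨ ∃ q ∈ m.primeFactors, p ∈ TT x y m q := by
    intro p hp
    rw [hP, Nat.mem_primeFactors] at hp
    obtain ⟨hpp, hpd, -⟩ := hp
    rcases hpp.dvd_mul.mp hpd with h | h
    · left
      rw [Nat.mem_primeFactors]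
      exact ⟨hpp, h, by positivity⟩
    have hpm := gs_dvd_int x y m h
    obtain ⟨hpx, hpy⟩ := not_dvd_of_dvd_sub hpp hco hm0 hpm
    have hom : ordp x y p ∣ m := (ordp_dvd hpp hpy m).mpr hpm
    by_cases ho : ordp x y p = 1
    · left
      have hps : (p : ℤ) ∣ (x : ℤ) - y := by
        have := (ordp_dvd hpp hpy 1).mp (by rw [ho])
        simpa using this
      have hpm' : p ∣ m := by
        rw [gs_mod hpp hps, hpp.dvd_mul] at h
        exact h.resolve_right (fun h => hpx (hpp.dvd_of_dvd_pow h))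
      have hpmem : p ∈ m.primeFactors := Nat.mem_primeFactors.mpr ⟨hpp, hpm', hm0.ne'⟩
      have h1 : p ∣ z * gs x y n :=
        (dvd_pow_self p (by have := hcnt1 p hpmem; omega)).trans (hqT p hpmem)
      have h2 : ¬ p ∣ gs x y n := by
        rw [gs_mod hpp hps, hpp.dvd_mul]
        rintro (h | h)
        · exact hqn p hpmem h
        · exact hpx (hpp.dvd_of_dvd_pow h)
      have h3 : p ∣ z := (hpp.dvd_mul.mp h1).resolve_right h2
      rw [Nat.mem_primeFactors]
      exact ⟨hpp, h3.mul_right d, by positivity⟩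
    · right
      obtain ⟨q, hq, hqo⟩ := Nat.exists_prime_and_dvd ho
      refine ⟨q, Nat.mem_primeFactors.mpr ⟨hq, hqo.trans hom, hm0.ne'⟩, ?_⟩
      rw [TT, Finset.mem_filter, Nat.mem_primeFactors]
      exact ⟨⟨hpp, h, hgm.ne'⟩, hqo⟩
  -- real analysis
  set f : ℕ → ℝ := fun p => Real.log ((p : ℝ) / (p - 1)) with hf
  have hP2 : ∀ p ∈ P, (2 : ℝ) ≤ p := by
    intro p hp
    exact_mod_cast (Nat.prime_of_mem_primeFactors hp).two_le
  have hf0 : ∀ p ∈ P, 0 ≤ f p := by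
    intro p hp
    have := hP2 p hp
    apply Real.log_nonneg
    rw [le_div_iff₀ (by linarith)]
    linarith
  have hf1 : ∀ p ∈ P, f p ≤ 1 / ((p : ℝ) - 1) := by
    intro p hp
    have := hP2 p hp
    have h1 : (0 : ℝ) < p - 1 := by linarith
    refine (Real.log_le_sub_one_of_pos (by positivity)).trans (le_of_eq ?_)
    field_simp
    ring
  have hzdP : (z * d).primeFactors ⊆ P := Nat.primeFactors_mono (dvd_mul_right _ _) hA0
  have hsum1 : ∑ p ∈ P, f p ≤ ∑ p ∈ (z * d).primeFactors, f p +
      ∑ q ∈ m.primeFactors, ∑ p ∈ TT x y m q, f p := by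
    have e1 : ∑ p ∈ (z * d).primeFactors, f p =
        ∑ p ∈ P, if p ∈ (z * d).primeFactors then f p else 0 := by
      rw [← Finset.sum_filter, Finset.filter_mem_eq_inter, Finset.inter_eq_right.mpr hzdP]
    have e2 : ∀ q ∈ m.primeFactors, ∑ p ∈ TT x y m q, f p =
        ∑ p ∈ P, if p ∈ TT x y m q then f p else 0 := by
      intro q _
      rw [← Finset.sum_filter, Finset.filter_mem_eq_inter, Finset.inter_eq_right.mpr (hTP q)]
    rw [e1, Finset.sum_congr rfl e2, Finset.sum_comm, ← Finset.sum_add_distrib]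
    apply Finset.sum_le_sum
    intro p hp
    have hfp := hf0 p hp
    have hn1 : ∀ q ∈ m.primeFactors, 0 ≤ (if p ∈ TT x y m q then f p else 0) := by
      intro q _; split_ifs <;> linarith
    rcases hcover p hp with h | ⟨q, hq, h⟩
    · rw [if_pos h]
      have := Finset.sum_nonneg hn1
      linarith
    · have h1 := Finset.single_le_sum hn1 hq
      rw [if_pos h] at h1
      have : 0 ≤ (if p ∈ (z * d).primeFactors then f p else 0) := by split_ifs <;> linarith
      linarith
  have hx3 : 3 ≤ x := by omega
  have hX3 : 3 ≤ d * x := by nlinarith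
  set L := Real.log ((d * x : ℕ) : ℝ) with hL
  have hsum2 : ∑ q ∈ m.primeFactors, ∑ p ∈ TT x y m q, f p ≤ (3 * L - 2 * Real.log 3) / 5 := by
    rcases Finset.eq_empty_or_nonempty m.primeFactors with hem | hne
    · rw [hem, Finset.sum_empty]
      have : Real.log 3 ≤ L := Real.log_le_log (by norm_num) (by exact_mod_cast hX3)
      have h3 : 0 ≤ Real.log 3 := Real.log_nonneg (by norm_num)
      linarith
    have hw : (0 : ℝ) < m.primeFactors.card := by exact_mod_cast Finset.card_pos.mpr hne
    have hb : ∀ q ∈ m.primeFactors, ∑ p ∈ TT x y m q, f p ≤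
        ((3 * L - 2 * Real.log 3) / 5) / m.primeFactors.card := by
      intro q hq
      have hqp := Nat.prime_of_mem_primeFactors hq
      have hq2 : q ≠ 2 := by
        rintro rfl
        have : Odd 2 := hm.of_dvd_nat (Nat.dvd_of_mem_primeFactors hq)
        revert this; decide
      have h1 : ∑ p ∈ TT x y m q, f p ≤ (harmonic (TT x y m q).card : ℝ) / (2 * q) :=
        (Finset.sum_le_sum (fun p hp => hf1 p (hTP q hp))).trans
          (sum_inv_pred_le _ q hqp.pos (hTfact q hq))
      have h2 := num_bound hX3 hqp hq2 (hcnt1 q hq) (hcnt q hq)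
        (val_bound hy hxy hxo hyo hco hd hz hzd hqp hq2 hn hn0 (hqn q hq) (hqT q hq))
      rw [le_div_iff₀ hw, mul_comm]
      exact (mul_le_mul_of_nonneg_left h1 hw.le).trans h2
    refine (Finset.sum_le_card_nsmul _ _ _ hb).trans (le_of_eq ?_)
    rw [nsmul_eq_mul]
    field_simp
  have hF := F_bound (z * d) (by positivity)
  have hN : Real.log (81 / 2 * ((z * d : ℕ) : ℝ)) ≤ 2 * Real.log 3 + 2 * L := by
    have h1 : 9 * (z * d) ≤ 2 * (d * x) ^ 2 := by
      have h2 : z ≤ d * (x - 1) := hzd.trans (by gcongr; omega)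
      obtain ⟨t, rfl⟩ : ∃ t, x = t + 3 := ⟨x - 3, by omega⟩
      have h3 : t + 3 - 1 = t + 2 := by omega
      rw [h3] at h2
      calc 9 * (z * d) ≤ 9 * (d * (t + 2) * d) := by gcongr
        _ = d ^ 2 * (9 * t + 18) := by ring
        _ ≤ d ^ 2 * (2 * (t + 3) ^ 2) := by gcongr; nlinarith
        _ = _ := by ring
    have h1' : (9 : ℝ) * ((z * d : ℕ) : ℝ) ≤ 2 * ((d * x : ℕ) : ℝ) ^ 2 := by exact_mod_cast h1
    have hXpos : (0 : ℝ) < ((d * x : ℕ) : ℝ) := by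
      have : 0 < d * x := by omega
      exact_mod_cast this
    have hzpos : (0 : ℝ) < ((z * d : ℕ) : ℝ) := by
      have : 0 < z * d := by positivity
      exact_mod_cast this
    have h4 : Real.log (3 ^ 2 * ((d * x : ℕ) : ℝ) ^ 2) = 2 * Real.log 3 + 2 * L := by
      rw [Real.log_mul (by norm_num) (by positivity), Real.log_pow, Real.log_pow]
      norm_num [hL]
    rw [← h4]
    apply Real.log_le_log (by positivity)
    linarith
  have hlow : L < ∑ p ∈ P, f p := by
    have e1 : ∑ p ∈ P, f p = Real.log (∏ p ∈ P, (p : ℝ)) - Real.log (∏ p ∈ P, ((p : ℝ) - 1)) := by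
      rw [Real.log_prod (fun p hp => by have := hP2 p hp; positivity),
        Real.log_prod (fun p hp => by have := hP2 p hp; intro h; linarith),
        ← Finset.sum_sub_distrib]
      apply Finset.sum_congr rfl
      intro p hp
      have := hP2 p hp
      exact Real.log_div (by positivity) (by intro h; linarith)
    have hpos : 0 < ∏ p ∈ P, ((p : ℝ) - 1) := 
      Finset.prod_pos (fun p hp => by have := hP2 p hp; linarith)
    have hcast : ((∏ p ∈ P, (p - 1) : ℕ) : ℝ) = ∏ p ∈ P, ((p : ℝ) - 1) := by
      rw [Nat.cast_prod]
      apply Finset.prod_congr rfl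
      intro p hp
      rw [Nat.cast_sub (Nat.prime_of_mem_primeFactors hp).one_le]
      simp
    have hR' : ((d * x : ℕ) : ℝ) * ∏ p ∈ P, ((p : ℝ) - 1) < ∏ p ∈ P, (p : ℝ) := by
      rw [← hcast, ← Nat.cast_prod, ← Nat.cast_mul]
      exact Nat.cast_lt.mpr hR
    have hXpos : (0 : ℝ) < ((d * x : ℕ) : ℝ) := by
      have : 0 < d * x := by omega
      exact_mod_cast this
    have := Real.log_lt_log (by positivity) hR'
    rw [Real.log_mul hXpos.ne' hpos.ne'] at this
    linarith
  have hF' : 5 * ∑ p ∈ (z * d).primeFactors, f p ≤ Real.log (81 / 2 * ((z * d : ℕ) : ℝ)) := hF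
  linarith

lemma prod_le_card (U : Finset ℕ) (hU : ∀ u ∈ U, 2 ≤ u) :
    ∏ p ∈ U, p ≤ (U.card + 1) * ∏ p ∈ U, (p - 1) := by
  induction U using Finset.induction_on_max with
  | empty => simp
  | insert a s hs ih =>
    have ha : a ∉ s := fun h => lt_irrefl _ (hs a h)
    rw [Finset.prod_insert ha, Finset.prod_insert ha, Finset.card_insert_of_notMem ha]
    have h1 := ih (fun u hu => hU u (Finset.mem_insert_of_mem hu))
    have ha2 := hU a (Finset.mem_insert_self _ _)
    have h2 : s.card + 2 ≤ a := by
      have hsub : s ⊆ Finset.Ico 2 a := by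
        intro u hu
        rw [Finset.mem_Ico]
        exact ⟨hU u (Finset.mem_insert_of_mem hu), hs u hu⟩
      have := Finset.card_le_card hsub
      simp at this
      omega
    have h3 : a * (s.card + 1) ≤ (s.card + 1 + 1) * (a - 1) := by
      obtain ⟨b, rfl⟩ : ∃ b, a = b + 1 := ⟨a - 1, by omega⟩
      simp only [Nat.add_sub_cancel]
      nlinarith
    calc a * ∏ p ∈ s, p ≤ a * ((s.card + 1) * ∏ p ∈ s, (p - 1)) := by gcongr
      _ = a * (s.card + 1) * ∏ p ∈ s, (p - 1) := by ring
      _ ≤ (s.card + 1 + 1) * (a - 1) * ∏ p ∈ s, (p - 1) := by gcongr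
      _ = _ := by ring

lemma gs_succ (x y k : ℕ) : gs x y (k + 1) = x * gs x y k + y ^ k := by
  unfold gs
  rw [Finset.sum_range_succ', Finset.mul_sum]
  congr 1
  · apply Finset.sum_congr rfl
    intro i hi
    rw [pow_succ]
    have : k + 1 - 1 - (i + 1) = k - 1 - i := by omega
    rw [this]; ring
  · simp

lemma gs_lt_succ {x y k : ℕ} (hy : 0 < y) : x * gs x y k < gs x y (k + 1) := by
  rw [gs_succ]
  have : 0 < y ^ k := by positivity
  omega

lemma gs_strictMono {x y : ℕ} (hy : 0 < y) (hx : 0 < x) : StrictMono (gs x y) := by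
  apply strictMono_nat_of_lt_succ
  intro k
  have := gs_lt_succ (x := x) (k := k) hy
  nlinarith

lemma gs_scale {x y d n : ℕ} (hn : 0 < n) : gs (d * x) (d * y) n = d ^ (n - 1) * gs x y n := by
  unfold gs
  rw [Finset.mul_sum]
  apply Finset.sum_congr rfl
  intro i hi
  rw [Finset.mem_range] at hi
  have : n - 1 = i + (n - 1 - i) := by omega
  rw [mul_pow, mul_pow]
  conv_rhs => rw [this, pow_add]
  have : i + (n - 1 - i) - i = n - 1 - i := by omega
  rw [this]
  ring

lemma div_eq_gs {x y n : ℕ} (hxy : y < x) : (x ^ n - y ^ n) / (x - y) = gs x y n := by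
  apply Nat.div_eq_of_eq_mul_left (by omega)
  have h := gs_mul_int x y n
  zify [hxy.le, Nat.pow_le_pow_left hxy.le n]
  exact h.symm

theorem phi_eq_general_coprime (x y z m n : ℕ) (hx : 0 < x) (hy : 0 < y) (hz : 0 < z)
    (hm : 0 < m) (hn : 0 < n) (hxy : y < x) (hzxy : z ≤ x - y)
    (hgcd : Nat.gcd m n = 1)
    (heq : Nat.totient (z * ((x ^ m - y ^ m) / (x - y))) =
      z * ((x ^ n - y ^ n) / (x - y))) :
    z = 1 ∧ m = 1 ∧ n = 1 := by
  rw [div_eq_gs hxy, div_eq_gs hxy] at heq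
  have hmono := gs_strictMono hy hx
  have hgn : 0 < gs x y n := gs_pos hx hn hy
  have hgm : 0 < gs x y m := gs_pos hx hm hy
  rcases Nat.lt_or_ge m 2 with hm1 | hm2
  · have hm1 : m = 1 := by omega
    subst hm1
    rw [gs_one, mul_one] at heq
    have hle := Nat.totient_le z
    have hg1 : gs x y n ≤ 1 := by
      by_contra hcon
      have : z * 2 ≤ z * gs x y n := by gcongr; omega
      omega
    have hn1 : n = 1 := by
      by_contra hne
      have : gs x y 1 < gs x y n := hmono (by omega)
      rw [gs_one] at this
      omega
    subst hn1
    rw [gs_one, mul_one] at heq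
    refine ⟨?_, rfl, rfl⟩
    by_contra hne
    have := Nat.totient_lt z (by omega)
    omega
  exfalso
  have hA1 : 1 < z * gs x y m := by
    have h1 : gs x y 1 < gs x y m := hmono (by omega)
    rw [gs_one] at h1
    nlinarith
  have hnm : n < m := by
    have h1 := Nat.totient_lt _ hA1
    rw [heq] at h1
    exact hmono.lt_iff_lt.mp (Nat.lt_of_mul_lt_mul_left h1)
  have hratio : x * gs x y n < gs x y m := by
    obtain ⟨k, rfl⟩ : ∃ k, m = k + 1 := ⟨m - 1, by omega⟩
    refine lt_of_le_of_lt ?_ (gs_lt_succ hy)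
    gcongr
    exact hmono.monotone (by omega)
  -- remove the common factor
  obtain ⟨d, a, b, hd, hab, hxa, hyb⟩ : ∃ d a b : ℕ, 0 < d ∧ Nat.Coprime a b ∧ x = d * a ∧ y = d * b := by
    obtain ⟨g, a, b, hg, hc, h1, h2⟩ := Nat.exists_coprime' (m := x) (n := y) (Nat.gcd_pos_of_pos_left _ hx)
    exact ⟨g, a, b, hg, hc, by rw [h1, mul_comm], by rw [h2, mul_comm]⟩
  have hb : 0 < b := by
    rcases Nat.eq_zero_or_pos b with h | h
    · subst h; omega
    · exact h
  have hba : b < a := by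
    rw [hxa, hyb] at hxy
    exact Nat.lt_of_mul_lt_mul_left hxy
  have hga : 0 < gs a b m := gs_pos (by omega) hm hb
  have hgb : 0 < gs a b n := gs_pos (by omega) hn hb
  have hsm : gs x y m = d ^ (m - 1) * gs a b m := by rw [hxa, hyb, gs_scale hm]
  have hsn : gs x y n = d ^ (n - 1) * gs a b n := by rw [hxa, hyb, gs_scale hn]
  have hPeq : (z * gs x y m).primeFactors = (z * d * gs a b m).primeFactors := by
    rw [hsm, Nat.primeFactors_mul hz.ne' (by positivity),
      Nat.primeFactors_mul (by positivity) hga.ne', Nat.primeFactors_pow _ (by omega),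
      Nat.primeFactors_mul (by positivity) hga.ne', Nat.primeFactors_mul hz.ne' hd.ne',
      Finset.union_assoc]
  have htot := Nat.totient_mul_prod_primeFactors (z * gs x y m)
  rw [heq, hPeq] at htot
  have hRdvd : ∏ p ∈ (z * d * gs a b m).primeFactors, p ∣ z * d * gs a b m :=
    Nat.prod_primeFactors_dvd _
  have hP2 : ∀ p ∈ (z * d * gs a b m).primeFactors, 2 ≤ p :=
    fun p hp => (Nat.prime_of_mem_primeFactors hp).two_le
  set P := (z * d * gs a b m).primeFactors with hP
  set R := ∏ p ∈ P, p with hRdef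
  set Q := ∏ p ∈ P, (p - 1) with hQdef
  have hQpos : 0 < Q := Finset.prod_pos (fun p hp => by have := hP2 p hp; omega)
  have hR : x * Q < R := by
    have h1 : gs x y n * R = gs x y m * Q := by
      apply Nat.eq_of_mul_eq_mul_left hz
      rw [← mul_assoc, ← mul_assoc]
      exact htot
    have h2 : gs x y n * (x * Q) < gs x y n * R := by
      rw [h1]
      calc gs x y n * (x * Q) = x * gs x y n * Q := by ring
        _ < gs x y m * Q := Nat.mul_lt_mul_of_pos_right hratio hQpos
    exact Nat.lt_of_mul_lt_mul_left h2
  have hQdvd : Q ∣ z * gs a b n := by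
    obtain ⟨t, ht⟩ := hRdvd
    rw [hsm, hsn] at htot
    obtain ⟨i, hi⟩ : ∃ i, m = n + 1 + i := ⟨m - n - 1, by omega⟩
    obtain ⟨j, hj⟩ : ∃ j, n = j + 1 := ⟨n - 1, by omega⟩
    have e1 : m - 1 = j + 1 + i := by omega
    have e2 : n - 1 = j := by omega
    rw [e1, e2] at htot
    have hpos : 0 < z * d ^ (j + 1) * gs a b m := by positivity
    refine ⟨d ^ i * t, ?_⟩
    apply Nat.eq_of_mul_eq_mul_left hpos
    calc z * d ^ (j + 1) * gs a b m * (z * gs a b n)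
        = z * (d ^ j * gs a b n) * (z * d * gs a b m) := by ring
      _ = z * (d ^ j * gs a b n) * R * t := by rw [ht]; ring
      _ = z * (d ^ (j + 1 + i) * gs a b m) * Q * t := by rw [htot]
      _ = _ := by ring
  have hzd : z ≤ d * (a - b) := by
    rw [Nat.mul_sub, ← hxa, ← hyb]; exact hzxy
  by_cases hcase : Even n ∧ Odd a ∧ Odd b
  · obtain ⟨hne, hao, hbo⟩ := hcase
    have hmo : Odd m := by
      rw [← Nat.not_even_iff_odd]
      intro hme
      have := Nat.dvd_gcd hme.two_dvd hne.two_dvd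
      rw [hgcd] at this
      omega
    exact main_case hb hba hao hbo hab hd hz hzd hmo hne hn hgcd hQdvd (by rw [← hxa]; exact hR)
  · have hodd : ¬ 2 ∣ gs a b n := by
      by_cases hab2 : (2 : ℤ) ∣ (a : ℤ) - b
      · rw [gs_mod Nat.prime_two (by exact_mod_cast hab2)]
        have hao : Odd a := by
          rw [← Nat.not_even_iff_odd]
          intro hae
          have h2a : 2 ∣ a := hae.two_dvd
          have h2b : 2 ∣ b := by omega
          exact Nat.not_coprime_of_dvd_of_dvd (by norm_num) h2a h2b hab
        have hbo : Odd b := by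
          obtain ⟨s, hs⟩ := hao
          rw [Nat.odd_iff]; omega
        have hno : Odd n := by
          rw [← Nat.not_even_iff_odd]
          exact fun h => hcase ⟨h, hao, hbo⟩
        rw [← even_iff_two_dvd, Nat.not_even_iff_odd]
        exact hno.mul hao.pow
      · intro h
        have h1 := gs_dvd_int a b n h
        apply hab2
        have h2 : Even ((a : ℤ) ^ n - (b : ℤ) ^ n) := even_iff_two_dvd.mpr (by exact_mod_cast h1)
        rw [Int.even_sub, Int.even_pow' hn.ne', Int.even_pow' hn.ne', ← Int.even_sub] at h2
        exact h2.two_dvd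
    have hr : 2 ^ (P.erase 2).card ∣ Q := by
      rw [← Finset.prod_const]
      refine Dvd.dvd.trans ?_ (Finset.prod_dvd_prod_of_subset _ _ _ (Finset.erase_subset 2 P))
      apply Finset.prod_dvd_prod_of_dvd
      intro p hp
      rw [Finset.mem_erase] at hp
      obtain ⟨t, ht⟩ := (Nat.prime_of_mem_primeFactors hp.2).odd_of_ne_two hp.1
      exact ⟨t, by omega⟩
    have h2z : 2 ^ (P.erase 2).card ∣ z := 
      (Nat.Coprime.pow_left _ (Nat.prime_two.coprime_iff_not_dvd.mpr hodd)).dvd_of_dvd_mul_right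
        (hr.trans hQdvd)
    have h3 := Nat.le_of_dvd hz h2z
    have h4 : (P.erase 2).card < 2 ^ (P.erase 2).card := Nat.lt_two_pow_self
    have h5 := prod_le_card P hP2
    have h6 : x < P.card + 1 := Nat.lt_of_mul_lt_mul_right (lt_of_lt_of_le hR h5)
    have h7 := Finset.pred_card_le_card_erase (s := P) (a := 2)
    omega
end

section
/- Let x, y, z, m, n be positive integers with x > y and m > n such that the 2-adic valuations of x and y differ, i.e. ν₂(x) ≠ ν₂(y). Then φ(z·(x^m − y^m)/(x − y)) = z·(x^n − y^n)/(x − y) holds if and only if x = 2, y = 1, m is a prime q with 2^q − 1 prime, n = q − 1, and z = 2^β·(2^q − 1)^u for some integers β ≥ 1 and u ≥ 0. -/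
def geoU (x y : ℕ) : ℕ → ℕ
  | 0 => 0
  | k + 1 => x * geoU x y k + y ^ k

theorem geoU_mul (x y k : ℕ) (h : y < x) : geoU x y k * (x - y) + y ^ k = x ^ k := by
  obtain ⟨d, rfl⟩ := Nat.exists_eq_add_of_lt h
  have e : y + d + 1 - y = d + 1 := by omega
  rw [e]
  induction k with
  | zero => simp [geoU]
  | succ k ih =>
    rw [pow_succ (y + d + 1), ← ih]
    simp only [geoU]
    ring

theorem geoU_eq (x y k : ℕ) (h : y < x) : (x ^ k - y ^ k) / (x - y) = geoU x y k := by
  have := geoU_mul x y k h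
  apply Nat.div_eq_of_eq_mul_left (by omega)
  omega

theorem geoU_scale (c a b k : ℕ) : geoU (c * a) (c * b) (k + 1) = c ^ k * geoU a b (k + 1) := by
  induction k with
  | zero => simp [geoU]
  | succ k ih =>
    rw [geoU, ih, geoU.eq_def a b (k + 1 + 1)]
    simp only
    ring

theorem geoU_odd (a b k : ℕ) (h : Odd (a + b)) : Odd (geoU a b (k + 1)) := by
  induction k with
  | zero => simp [geoU]
  | succ k ih =>
    rw [geoU]
    rw [Nat.odd_add, Nat.odd_mul, Nat.even_pow, ← Nat.not_odd_iff_even]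
    rw [Nat.odd_add, ← Nat.not_odd_iff_even] at h
    tauto

theorem geoU_gt (x y n d : ℕ) (hy : 0 < y) : x ^ (d + 1) * geoU x y n < geoU x y (n + d + 1) := by
  have key : ∀ k, x * geoU x y k < geoU x y (k + 1) := fun k => by
    have := pow_pos hy k
    simp only [geoU]; omega
  induction d with
  | zero => simpa using key n
  | succ d ih =>
    calc x ^ (d + 1 + 1) * geoU x y n = x * (x ^ (d + 1) * geoU x y n) := by ring
      _ ≤ x * geoU x y (n + d + 1) := Nat.mul_le_mul_left _ ih.le
      _ < _ := key _

theorem geoU_pos (x y n : ℕ) (hy : 0 < y) : 0 < geoU x y (n + 1) := by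
  have := pow_pos hy n
  simp only [geoU]; omega

theorem exists_split (x y : ℕ) (hx : 0 < x) (hy : 0 < y)
    (hval : padicValNat 2 x ≠ padicValNat 2 y) :
    ∃ t a b, x = 2 ^ t * a ∧ y = 2 ^ t * b ∧ Odd (a + b) := by
  obtain ⟨i, a, ha, rfl⟩ := Nat.exists_eq_two_pow_mul_odd hx.ne'
  obtain ⟨j, b, hb, rfl⟩ := Nat.exists_eq_two_pow_mul_odd hy.ne'
  rcases lt_trichotomy i j with h | h | h
  · obtain ⟨d, rfl⟩ := Nat.exists_eq_add_of_lt h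
    refine ⟨i, a, 2 ^ (d + 1) * b, rfl, by ring, ?_⟩
    exact ha.add_even (Even.mul_right (by simp [Nat.even_pow]) _)
  · subst h
    exfalso
    apply hval
    have hz : ∀ c, Odd c → padicValNat 2 c = 0 := fun c hc =>
      padicValNat.eq_zero_of_not_dvd hc.not_two_dvd_nat
    rw [padicValNat.mul (by positivity) (by rintro rfl; simp at ha),
      padicValNat.mul (by positivity) (by rintro rfl; simp at hb), hz a ha, hz b hb]
  · obtain ⟨d, rfl⟩ := Nat.exists_eq_add_of_lt h
    refine ⟨j, 2 ^ (d + 1) * a, b, by ring, rfl, ?_⟩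
    exact Even.add_odd (Even.mul_right (by simp [Nat.even_pow]) _) hb

theorem prime_power_of_totient (M r : ℕ) (hM : Odd M) (h1 : 1 < M) (hr : Odd r)
    (h : Nat.totient M = 2 * r) : ∃ p k, Nat.Prime p ∧ 3 ≤ p ∧ M = p ^ (k + 1) := by
  have hp : M.minFac.Prime := Nat.minFac_prime (by omega)
  have hpd := M.minFac_dvd
  set p := M.minFac
  have hp3 : 3 ≤ p := by
    have := hp.two_le
    rcases this.eq_or_lt with h2 | h2
    · rw [← h2] at hpd
      exact absurd hpd hM.not_two_dvd_nat
    · exact h2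
  obtain ⟨k, M', hnd, hMM⟩ := Nat.exists_eq_pow_mul_and_not_dvd (n := M) (by omega) p hp.ne_one
  have hk : k ≠ 0 := by
    rintro rfl
    apply hnd
    simpa [hMM] using hpd
  obtain ⟨k, rfl⟩ := Nat.exists_eq_succ_of_ne_zero hk
  refine ⟨p, k, hp, hp3, ?_⟩
  have hcop : Nat.Coprime (p ^ (k + 1)) M' := (Nat.Prime.coprime_iff_not_dvd hp |>.2 hnd).pow_left _
  have hM' : Odd M' := by
    rw [hMM] at hM
    exact (Nat.odd_mul.1 hM).2
  by_cases h3 : M' = 1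
  · rw [hMM, h3]; simp
  exfalso
  have h4 : 2 < M' := by
    rcases hM' with ⟨c, rfl⟩
    omega
  have h5 : 2 < p ^ (k + 1) := lt_of_lt_of_le hp3 (Nat.le_self_pow (by omega) p)
  rw [hMM, Nat.totient_mul hcop] at h
  obtain ⟨c, hc⟩ := Nat.totient_even h4
  obtain ⟨d, hd⟩ := Nat.totient_even h5
  obtain ⟨e, rfl⟩ := hr
  rw [hc, hd] at h
  have : 2 * (d * c * 2) = 2 * (2 * e + 1) := by linarith
  omega

theorem forward_dir (x y z m n : ℕ)
    (hx : 0 < x) (hy : 0 < y) (hz : 0 < z) (hn : 0 < n)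
    (hxy : y < x) (hmn : n < m)
    (hval : padicValNat 2 x ≠ padicValNat 2 y)
    (h : Nat.totient (z * geoU x y m) = z * geoU x y n) :
    (x = 2 ∧ y = 1 ∧ Nat.Prime m ∧ Nat.Prime (2 ^ m - 1) ∧ n = m - 1 ∧
      ∃ β u : ℕ, 1 ≤ β ∧ z = 2 ^ β * (2 ^ m - 1) ^ u) := by
  obtain ⟨n, rfl⟩ := Nat.exists_eq_succ_of_ne_zero hn.ne'
  obtain ⟨d, rfl⟩ := Nat.exists_eq_add_of_lt hmn
  simp only [Nat.succ_eq_add_one] at *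
  obtain ⟨t, a, b, ex, ey, hab⟩ := exists_split x y hx hy hval
  obtain ⟨s, w, hw, ez⟩ := Nat.exists_eq_two_pow_mul_odd hz.ne'
  have hb : 0 < b := Nat.pos_of_ne_zero (by rintro rfl; simp [ey] at hy)
  have hba : b < a := by
    rw [ex, ey] at hxy
    exact Nat.lt_of_mul_lt_mul_left hxy
  have hw0 : 0 < w := hw.pos
  have oM : Odd (w * geoU a b (n + 1 + d + 1)) := hw.mul (geoU_odd a b _ hab)
  have oR : Odd (w * geoU a b (n + 1)) := hw.mul (geoU_odd a b _ hab)
  have hgt := geoU_gt a b (n + 1) d hb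
  have hpos := geoU_pos a b n hb
  have hM1 : 1 < w * geoU a b (n + 1 + d + 1) := by
    have h1 : 1 ≤ a ^ (d + 1) * geoU a b (n + 1) :=
      Nat.mul_pos (pow_pos (by omega) _) hpos
    nlinarith
  have hM2 : 2 < w * geoU a b (n + 1 + d + 1) := by
    rcases oM with ⟨c, hc⟩
    omega
  have hcop : Nat.Coprime (2 ^ (s + t * (n + 1 + d))) (w * geoU a b (n + 1 + d + 1)) :=
    (Nat.coprime_two_left.2 oM).pow_left _
  have e1 : z * geoU x y (n + 1 + d + 1)
      = 2 ^ (s + t * (n + 1 + d)) * (w * geoU a b (n + 1 + d + 1)) := by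
    rw [ex, ey, ez, geoU_scale, ← pow_mul]; ring
  have e2 : z * geoU x y (n + 1) = 2 ^ (s + t * n) * (w * geoU a b (n + 1)) := by
    rw [ex, ey, ez, geoU_scale, ← pow_mul]; ring
  rw [e1, e2, Nat.totient_mul hcop] at h
  obtain ⟨c, hc⟩ := Nat.totient_even hM2
  -- the exponent of two in the argument is positive
  have he : s + t * (n + 1 + d) ≠ 0 := by
    intro he
    have hs : s = 0 := by omega
    have ht : t = 0 := by
      have : t * (n + 1 + d) = 0 := by omega
      rcases Nat.mul_eq_zero.1 this with h' | h' <;> omega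
    subst hs ht
    simp only [Nat.zero_mul, Nat.add_zero, pow_zero, Nat.totient_one, one_mul] at h
    rw [← h, hc] at oR
    exact (Nat.not_odd_iff_even.2 ⟨c, rfl⟩) oR
  obtain ⟨e, hee⟩ := Nat.exists_eq_succ_of_ne_zero he
  rw [hee, Nat.totient_prime_pow_succ Nat.prime_two] at h
  have h' : 2 ^ (e + 1) * c = 2 ^ (s + t * n) * (w * geoU a b (n + 1)) := by
    rw [← h, hc]; ring
  have hle : e + 1 ≤ s + t * n := by
    have hd : 2 ^ (e + 1) ∣ 2 ^ (s + t * n) :=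
      Nat.Coprime.dvd_of_dvd_mul_right
        ((Nat.coprime_two_left.2 oR).pow_left _) ⟨c, h'.symm⟩
    exact (Nat.pow_dvd_pow_iff_le_right (by norm_num)).1 hd
  have ht : t = 0 := by
    by_contra h0
    have : t * n < t * (n + 1 + d) := Nat.mul_lt_mul_of_pos_left (by omega) (by omega)
    omega
  subst ht
  simp only [Nat.zero_mul, Nat.add_zero, pow_zero, one_mul] at *
  subst ex ey
  rw [hee] at h
  have hφ : Nat.totient (w * geoU x y (n + 1 + d + 1)) = 2 * (w * geoU x y (n + 1)) := by
    have : 2 ^ e * Nat.totient (w * geoU x y (n + 1 + d + 1))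
        = 2 ^ e * (2 * (w * geoU x y (n + 1))) := by
      rw [Nat.succ_eq_add_one, pow_succ] at h
      linarith
    exact Nat.eq_of_mul_eq_mul_left (by positivity) this
  obtain ⟨p, k, hp, hp3, hpk⟩ := prime_power_of_totient _ _ oM hM1 oR hφ
  obtain ⟨q, rfl⟩ := Nat.exists_eq_add_of_le hp3
  have hrel : (2 + q) * geoU x y (n + 1 + d + 1) = 2 * (3 + q) * geoU x y (n + 1) := by
    rw [hpk, Nat.totient_prime_pow_succ hp] at hφ
    have e3 : 3 + q - 1 = 2 + q := by omega
    rw [e3] at hφ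
    apply Nat.eq_of_mul_eq_mul_left hw0
    calc w * ((2 + q) * geoU x y (n + 1 + d + 1))
        = (2 + q) * (w * geoU x y (n + 1 + d + 1)) := by ring
      _ = (3 + q) * ((3 + q) ^ k * (2 + q)) := by rw [hpk]; ring
      _ = _ := by rw [hφ]; ring
  have hlt : x ^ (d + 1) < 3 := by
    by_contra hcon
    push Not at hcon
    have : 3 * geoU x y (n + 1) < geoU x y (n + 1 + d + 1) :=
      lt_of_le_of_lt (Nat.mul_le_mul_right _ hcon) hgt
    nlinarith
  have hx2 : x = 2 := by
    have := Nat.le_self_pow (n := d + 1) (by omega) x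
    omega
  have hy1 : y = 1 := by omega
  subst hx2 hy1
  have hd0 : d = 0 := by
    by_contra h0
    have : 2 ^ 2 ≤ 2 ^ (d + 1) := Nat.pow_le_pow_right (by norm_num) (by omega)
    omega
  subst hd0
  simp only [Nat.add_zero] at *
  have g1 := geoU_mul 2 1 (n + 1) (by norm_num)
  have g2 := geoU_mul 2 1 (n + 1 + 1) (by norm_num)
  simp only [one_pow, Nat.reduceSub, mul_one] at g1 g2
  have hU : geoU 2 1 (n + 1 + 1) = 3 + q := by
    have : geoU 2 1 (n + 1 + 1) = 2 * geoU 2 1 (n + 1) + 1 := by simp [geoU]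
    nlinarith
  have hpe : 2 ^ (n + 1 + 1) - 1 = 3 + q := by omega
  have hpp : Nat.Prime (2 ^ (n + 1 + 1) - 1) := by rw [hpe]; exact hp
  refine ⟨trivial, trivial, ?_, hpp, by omega, ?_⟩
  · exact Nat.Prime.of_mersenne hpp
  · have hwd : w ∣ (3 + q) ^ (k + 1) := ⟨_, hpk.symm⟩
    obtain ⟨u, -, hu⟩ := (Nat.dvd_prime_pow hp).1 hwd
    exact ⟨s, u, by omega, by rw [hpe, ez, hu]⟩

theorem backward_dir (m β u : ℕ) (hm : Nat.Prime m) (hp : Nat.Prime (2 ^ m - 1)) (hβ : 1 ≤ β) :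
    Nat.totient (2 ^ β * (2 ^ m - 1) ^ u * geoU 2 1 m)
      = 2 ^ β * (2 ^ m - 1) ^ u * geoU 2 1 (m - 1) := by
  obtain ⟨k, rfl⟩ := Nat.exists_eq_succ_of_ne_zero hm.ne_zero
  obtain ⟨β, rfl⟩ := Nat.exists_eq_add_of_le' hβ
  have g1 := geoU_mul 2 1 k (by norm_num)
  have g2 := geoU_mul 2 1 (k + 1) (by norm_num)
  simp only [one_pow, Nat.reduceSub, mul_one, Nat.succ_eq_add_one, Nat.add_sub_cancel] at *
  have e : 2 ^ (k + 1) - 1 = 2 * geoU 2 1 k + 1 := by rw [pow_succ]; omega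
  have e' : geoU 2 1 (k + 1) = 2 * geoU 2 1 k + 1 := by simp [geoU]
  rw [e] at hp ⊢
  rw [e', mul_assoc, ← pow_succ, Nat.totient_mul, Nat.totient_prime_pow_succ Nat.prime_two,
    Nat.totient_prime_pow_succ hp]
  · simp only [Nat.add_sub_cancel]
    ring
  · exact ((Nat.coprime_two_left.2 ⟨_, rfl⟩).pow_left _).pow_right _


theorem phi_eq_two_adic_valuations_differ (x y z m n : ℕ)
    (hx : 0 < x) (hy : 0 < y) (hz : 0 < z) (hm : 0 < m) (hn : 0 < n)
    (hxy : y < x) (hmn : n < m)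
    (hval : padicValNat 2 x ≠ padicValNat 2 y) :
    Nat.totient (z * ((x ^ m - y ^ m) / (x - y))) =
      z * ((x ^ n - y ^ n) / (x - y)) ↔
    (x = 2 ∧ y = 1 ∧ Nat.Prime m ∧ Nat.Prime (2 ^ m - 1) ∧ n = m - 1 ∧
      ∃ β u : ℕ, 1 ≤ β ∧ z = 2 ^ β * (2 ^ m - 1) ^ u) := by
  rw [geoU_eq x y m hxy, geoU_eq x y n hxy]
  constructor
  · exact forward_dir x y z m n hx hy hz hn hxy hmn hval
  · rintro ⟨rfl, rfl, hmp, hp, rfl, β, u, hβ, rfl⟩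
    exact backward_dir m β u hmp hp hβ
end

section
/- Under the standing assumptions, let d be a divisor of m with d ≥ 40, and let S_d = Σ_{p} 1/p, where the sum (taken in the real numbers) runs over the odd primes p with p ∤ x₁·y₁ and ℓ_p = d. Then S_d < 1/(4d) + 1/(d·log(d+1)) + 2·log log d / φ(d) + 2·log log x / (φ(d)·log d). -/
/-- `ellp a b p` is the least positive integer `ℓ` such that `p ∣ a ^ ℓ - b ^ ℓ`
(and `0` if no such integer exists). -/
noncomputable def ellp (a b p : ℕ) : ℕ := sInf {ℓ : ℕ | 0 < ℓ ∧ p ∣ a ^ ℓ - b ^ ℓ}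


lemma ap_step_up (q k : ℝ) (hq : 0 < q) (hk : 0 < k) :
    1 / (k + q) ≤ Real.log ((k + q) / k) / q := by
  have h := Real.one_sub_inv_le_log_of_pos (x := (k + q) / k) (by positivity)
  have : 1 - ((k + q) / k)⁻¹ = q / (k + q) := by field_simp; ring
  rw [this] at h
  rw [le_div_iff₀ hq]
  calc 1 / (k + q) * q = q / (k + q) := by ring
    _ ≤ _ := h

lemma ap_step_lo (q k : ℝ) (hq : 0 < q) (hk : 0 < k) :
    Real.log ((k + q) / k) / q ≤ 1 / k := by
  have h := Real.log_le_sub_one_of_pos (x := (k + q) / k) (by positivity)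
  have : (k + q) / k - 1 = q / k := by field_simp; ring
  rw [this] at h
  rw [div_le_iff₀ hq]
  calc _ ≤ q / k := h
    _ = _ := by ring

lemma ap_sum_up (q k : ℝ) (hq : 0 < q) (hk : 0 < k) (n : ℕ) :
    ∑ i ∈ Finset.range (n + 1), 1 / (k + q * i) ≤ 1 / k + Real.log ((k + q * n) / k) / q := by
  induction n with
  | zero => simp [hk.ne']
  | succ n ih =>
    rw [Finset.sum_range_succ]
    have h := ap_step_up q (k + q * n) hq (by positivity)
    have e : Real.log ((k + q * (n + 1 : ℕ)) / k) =
        Real.log ((k + q * n) / k) + Real.log ((k + q * n + q) / (k + q * n)) := by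
      rw [← Real.log_mul (by positivity) (by positivity)]
      congr 1
      field_simp
      push_cast; ring
    rw [e, add_div]
    have e2 : k + q * ((n + 1 : ℕ) : ℝ) = k + q * n + q := by push_cast; ring
    rw [e2]
    linarith

lemma ap_sum_lo (q k : ℝ) (hq : 0 < q) (hk : 0 < k) (n : ℕ) :
    Real.log ((k + q * n) / k) / q ≤ ∑ i ∈ Finset.range n, 1 / (k + q * i) := by
  induction n with
  | zero => simp [hk.ne']
  | succ n ih =>
    rw [Finset.sum_range_succ]
    have h := ap_step_lo q (k + q * n) hq (by positivity)
    have e : Real.log ((k + q * (n + 1 : ℕ)) / k) =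
        Real.log ((k + q * n) / k) + Real.log ((k + q * n + q) / (k + q * n)) := by
      rw [← Real.log_mul (by positivity) (by positivity)]
      congr 1
      field_simp
      push_cast; ring
    rw [e, add_div]
    linarith

lemma ap_set (q M N r : ℕ) (hq : 0 < q) : ∃ k₀ n : ℕ, M < k₀ ∧ k₀ ≤ M + q ∧ N < k₀ + q * n ∧
    (0 < n → k₀ + q * (n - 1) ≤ N) ∧
    (Finset.Ioc M N).filter (fun k => k ≡ r [MOD q]) =
      (Finset.range n).image (fun i => k₀ + q * i) := by
  obtain ⟨k₀, h1, h2, h3⟩ : ∃ k₀, M < k₀ ∧ k₀ ≤ M + q ∧ k₀ ≡ r [MOD q] := by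
    refine ⟨M + 1 + (r + q * (M + 1) - (M + 1)) % q, by omega, ?_, ?_⟩
    · have := Nat.mod_lt (r + q * (M + 1) - (M + 1)) hq
      omega
    · have hle : M + 1 ≤ r + q * (M + 1) := by nlinarith
      have h : M + 1 + (r + q * (M + 1) - (M + 1)) % q ≡ M + 1 + (r + q * (M + 1) - (M + 1)) [MOD q] :=
        Nat.ModEq.add_left _ (Nat.mod_modEq _ _)
      rw [Nat.add_sub_cancel' hle] at h
      refine h.trans ?_
      simp [Nat.ModEq]
  refine ⟨k₀, (N + q - k₀) / q, h1, h2, ?_, ?_, ?_⟩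
  · have := Nat.lt_mul_div_succ (N + q - k₀) hq
    rw [Nat.mul_add] at this
    omega
  · intro h
    have := Nat.mul_div_le (N + q - k₀) q
    rw [Nat.mul_sub]
    have h' : q * 1 ≤ q * ((N + q - k₀) / q) := Nat.mul_le_mul_left _ h
    omega
  · ext k
    simp only [Finset.mem_filter, Finset.mem_Ioc, Finset.mem_image, Finset.mem_range]
    constructor
    · rintro ⟨⟨ha, hb⟩, hc⟩
      have hk : k₀ ≡ k [MOD q] := h3.trans hc.symm
      have hkk : k₀ ≤ k := by
        by_contra hlt
        push Not at hlt
        have h4 : q ∣ k₀ - k := (Nat.modEq_iff_dvd' hlt.le).1 hk.symm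
        have := Nat.le_of_dvd (by omega) h4
        omega
      obtain ⟨i, hi⟩ := (Nat.modEq_iff_dvd' hkk).1 hk
      refine ⟨i, ?_, by omega⟩
      rw [Nat.lt_iff_add_one_le, Nat.le_div_iff_mul_le hq]
      have : (i + 1) * q = q * i + q := by ring
      omega
    · rintro ⟨i, hi, rfl⟩
      rw [Nat.lt_iff_add_one_le, Nat.le_div_iff_mul_le hq] at hi
      have : (i + 1) * q = q * i + q := by ring
      refine ⟨⟨by omega, by omega⟩, ?_⟩
      refine Nat.ModEq.trans ?_ h3
      simp [Nat.ModEq]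

/-- Sum of `1/k` over a residue class in `(A,B]`. -/
lemma ap_bound (A B : ℝ) (hA : 0 < A) (hAB : A ≤ B) (q r : ℕ) (hq : 0 < q) :
    |∑ k ∈ (Finset.Ioc ⌊A⌋₊ ⌊B⌋₊).filter (fun k => k ≡ r [MOD q]), (1 : ℝ) / k
      - Real.log (B / A) / q| ≤ 1 / A := by
  obtain ⟨k₀, n, h1, h2, h3, h4, h5⟩ := ap_set q ⌊A⌋₊ ⌊B⌋₊ r hq
  rw [h5, Finset.sum_image (by
    intro i _ j _ h
    simpa [hq.ne'] using h)]
  have hB : 0 < B := hA.trans_le hAB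
  have hqR : (0 : ℝ) < q := by exact_mod_cast hq
  have hk0A : A < k₀ := (Nat.floor_lt hA.le).1 h1
  have hk0 : (0 : ℝ) < k₀ := hA.trans hk0A
  have hk0q : (k₀ : ℝ) ≤ A + q := by
    have : (k₀ : ℝ) ≤ ⌊A⌋₊ + q := by exact_mod_cast h2
    linarith [Nat.floor_le hA.le]
  have hBn : B < k₀ + q * n := by
    have := (Nat.floor_lt hB.le).1 h3
    push_cast at this
    exact this
  push_cast
  rw [abs_le]
  constructor
  · have hlo := ap_sum_lo q k₀ hqR hk0 n
    have e : Real.log (B / A) ≤ Real.log ((k₀ + q * n) / k₀) + Real.log (k₀ / A) := by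
      rw [← Real.log_mul (by positivity) (by positivity)]
      apply Real.log_le_log (by positivity)
      rw [div_mul_div_cancel₀ hk0.ne']
      gcongr
    have e2 : Real.log (k₀ / A) ≤ q / A := by
      refine (Real.log_le_sub_one_of_pos (by positivity)).trans ?_
      rw [sub_le_iff_le_add, div_add_one hA.ne']
      gcongr
      linarith
    have e3 : Real.log (B / A) / q ≤ Real.log ((k₀ + q * n) / k₀) / q + 1 / A := by
      have : (1 : ℝ) / A = (q / A) / q := by field_simp
      rw [this, ← add_div]
      gcongr
      linarith
    linarith
  · rcases n with _ | n
    · simp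
      have : 0 ≤ Real.log (B / A) / q := div_nonneg (Real.log_nonneg (by rwa [le_div_iff₀ hA, one_mul])) hqR.le
      have : 0 < A⁻¹ := by positivity
      linarith
    · have hup := ap_sum_up q k₀ hqR hk0 n
      have hh : (k₀ : ℝ) + q * n ≤ B := by
        have := (Nat.le_floor_iff hB.le).1 (h4 (by omega))
        simpa using this
      have e1 : Real.log ((k₀ + q * n) / k₀) ≤ Real.log (B / A) := by
        apply Real.log_le_log (by positivity)
        gcongr
      have e2 : Real.log ((k₀ + q * n) / k₀) / q ≤ Real.log (B / A) / q := by gcongr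
      have e3 : 1 / (k₀ : ℝ) ≤ 1 / A := by gcongr
      linarith

/-- Sieve moduli. -/
def sieveD (d Q : ℕ) : Finset ℕ :=
  (Finset.Icc 1 Q).filter (fun q => Squarefree q ∧ Nat.Coprime q d)

/-- The Selberg denominator. -/
noncomputable def sieveG (d Q : ℕ) : ℝ := ∑ q ∈ sieveD d Q, 1 / (Nat.totient q : ℝ)

lemma factored_sum_le (N : ℕ) (hN : N ≠ 0) (T : Finset ℕ)
    (hT : ∀ t ∈ T, t ≠ 0 ∧ t.primeFactors ⊆ N.primeFactors) :
    ∑ t ∈ T, (1 : ℝ) / t ≤ N / Nat.totient N := by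
  let f : ℕ →* ℝ :=
    { toFun := fun n => (n : ℝ)⁻¹
      map_one' := by simp
      map_mul' := by intro a b; simp [mul_comm] }
  have hf : ∀ {p : ℕ}, p.Prime → ‖f p‖ < 1 := by
    intro p hp
    change ‖(p : ℝ)⁻¹‖ < 1
    rw [norm_inv, Real.norm_natCast]
    exact inv_lt_one_of_one_lt₀ (by exact_mod_cast hp.one_lt)
  obtain ⟨hs, hh⟩ := EulerProduct.summable_and_hasSum_factoredNumbers_prod_filter_prime_geometric
    (f := f) hf N.primeFactors
  have e1 : ∏ p ∈ N.primeFactors with Nat.Prime p, (1 - f p)⁻¹ = (N : ℝ) / Nat.totient N := by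
    rw [Finset.filter_true_of_mem (fun p hp => Nat.prime_of_mem_primeFactors hp)]
    have h := Nat.totient_eq_mul_prod_factors N
    have h' : (Nat.totient N : ℝ) = N * ∏ p ∈ N.primeFactors, (1 - (p : ℝ)⁻¹) := by
      have := congrArg (fun q : ℚ => (q : ℝ)) h
      push_cast at this
      exact this
    have hφ : (Nat.totient N : ℝ) ≠ 0 := by
      have := Nat.totient_pos.2 (Nat.pos_of_ne_zero hN)
      positivity
    rw [Finset.prod_inv_distrib]
    change (∏ p ∈ N.primeFactors, (1 - (p : ℝ)⁻¹))⁻¹ = _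
    rw [h'] at hφ ⊢
    have hN' : (N : ℝ) ≠ 0 := by exact_mod_cast hN
    field_simp
  rw [e1] at hh
  have hmem : ∀ t ∈ T, t ∈ Nat.factoredNumbers N.primeFactors := fun t ht =>
    Nat.mem_factoredNumbers_of_primeFactors_subset (hT t ht).1 (hT t ht).2
  have := sum_le_hasSum (T.subtype (· ∈ Nat.factoredNumbers N.primeFactors)) (fun i _ => by
    change 0 ≤ ((i : ℕ) : ℝ)⁻¹
    positivity) hh
  refine le_trans (le_of_eq ?_) this
  rw [Finset.sum_subtype_of_mem (fun t => f t) hmem]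
  refine Finset.sum_congr rfl fun t _ => ?_
  change 1 / (t : ℝ) = (t : ℝ)⁻¹
  simp

lemma harmonic_le_sieveG (d Q : ℕ) (hd : 0 < d) :
    ∑ n ∈ Finset.Icc 1 Q, (1 : ℝ) / n ≤ d / Nat.totient d * sieveG d Q := by
  let κ : ℕ → ℕ := fun n => ∏ p ∈ n.primeFactors \ d.primeFactors, p
  have hκdvd : ∀ n, n ≠ 0 → κ n ∣ n := fun n hn =>
    (Finset.prod_dvd_prod_of_subset _ _ _ Finset.sdiff_subset).trans (Nat.prod_primeFactors_dvd n)
  have hκpf : ∀ n, (κ n).primeFactors = n.primeFactors \ d.primeFactors := fun n =>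
    Nat.primeFactors_prod (fun p hp => Nat.prime_of_mem_primeFactors (Finset.mem_sdiff.1 hp).1)
  have hκ0 : ∀ n, κ n ≠ 0 := fun n => Finset.prod_ne_zero_iff.2 fun p hp =>
    (Nat.prime_of_mem_primeFactors (Finset.mem_sdiff.1 hp).1).ne_zero
  have hκ : ∀ n ∈ Finset.Icc 1 Q, κ n ∈ sieveD d Q := by
    intro n hn
    rw [Finset.mem_Icc] at hn
    have hle := Nat.le_of_dvd (by omega) (hκdvd n (by omega))
    simp only [sieveD, Finset.mem_filter, Finset.mem_Icc]
    refine ⟨⟨Nat.pos_of_ne_zero (hκ0 n), by omega⟩, ?_, ?_⟩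
    · exact Finset.squarefree_prod_of_pairwise_isCoprime (fun p hp q hq hpq => by
        have hp' := Nat.prime_of_mem_primeFactors (Finset.mem_sdiff.1 hp).1
        have hq' := Nat.prime_of_mem_primeFactors (Finset.mem_sdiff.1 hq).1
        exact Nat.coprime_iff_isRelPrime.1 ((Nat.coprime_primes hp' hq').2 hpq))
        (fun p hp => (Nat.prime_of_mem_primeFactors (Finset.mem_sdiff.1 hp).1).prime.squarefree)
    · rw [← Nat.disjoint_primeFactors (hκ0 n) hd.ne', hκpf]
      exact Finset.sdiff_disjoint
  rw [← Finset.sum_fiberwise_of_maps_to hκ, sieveG, Finset.mul_sum]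
  refine Finset.sum_le_sum fun q hq => ?_
  simp only [sieveD, Finset.mem_filter, Finset.mem_Icc] at hq
  have hq0 : q ≠ 0 := by omega
  have key := factored_sum_le (d * q) (by positivity)
    (((Finset.Icc 1 Q).filter (fun n => κ n = q)).image (fun n => n / q)) (by
      intro t ht
      simp only [Finset.mem_image, Finset.mem_filter, Finset.mem_Icc] at ht
      obtain ⟨n, ⟨⟨hn1, hn2⟩, hnq⟩, rfl⟩ := ht
      have hdv : q ∣ n := hnq ▸ hκdvd n (by omega)
      have hne : n / q ≠ 0 := (Nat.div_pos (Nat.le_of_dvd (by omega) hdv) (by omega)).ne'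
      refine ⟨hne, ?_⟩
      refine (Nat.primeFactors_mono (Nat.div_dvd_of_dvd hdv) (by omega)).trans ?_
      rw [Nat.primeFactors_mul hd.ne' hq0, ← hnq, hκpf]
      intro p hp
      by_cases h : p ∈ d.primeFactors <;> simp_all)
  rw [Finset.sum_image (by
    intro a ha b hb hab
    simp only [Finset.coe_filter, Finset.mem_Icc, Set.mem_ofPred_eq] at ha hb
    have h1 : q ∣ a := ha.2 ▸ hκdvd a (by omega)
    have h2 : q ∣ b := hb.2 ▸ hκdvd b (by omega)
    exact (Nat.div_left_inj h1 h2).1 hab)] at key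
  rw [Nat.totient_mul hq.2.2.symm] at key
  have hqR : (0 : ℝ) < q := by positivity
  have e : ∑ n ∈ Finset.Icc 1 Q with κ n = q, (1 : ℝ) / n =
      (1 / q) * ∑ n ∈ Finset.Icc 1 Q with κ n = q, (1 : ℝ) / ((n / q : ℕ) : ℝ) := by
    rw [Finset.mul_sum]
    refine Finset.sum_congr rfl fun n hn => ?_
    simp only [Finset.mem_filter, Finset.mem_Icc] at hn
    have h1 : q ∣ n := hn.2 ▸ hκdvd n (by omega)
    rw [Nat.cast_div h1 hqR.ne']
    field_simp
  rw [e]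
  calc _ ≤ (1 / (q : ℝ)) * (((d * q : ℕ) : ℝ) / ((d.totient * q.totient : ℕ) : ℝ)) := by gcongr
    _ = _ := by push_cast; field_simp

lemma mem_sieveD {d Q q : ℕ} : q ∈ sieveD d Q ↔ (1 ≤ q ∧ q ≤ Q) ∧ Squarefree q ∧ Nat.Coprime q d := by
  simp [sieveD]

lemma sieveD_of_dvd {d Q q e : ℕ} (hq : q ∈ sieveD d Q) (h : e ∣ q) : e ∈ sieveD d Q := by
  rw [mem_sieveD] at *
  have := Nat.le_of_dvd hq.1.1 h
  exact ⟨⟨Nat.pos_of_dvd_of_pos h hq.1.1, by omega⟩, hq.2.1.squarefree_of_dvd h,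
    hq.2.2.coprime_dvd_left h⟩

lemma sieveG_pos (d Q : ℕ) (hQ : 1 ≤ Q) : 0 < sieveG d Q := by
  refine Finset.sum_pos (fun q hq => ?_) ⟨1, mem_sieveD.2 ⟨⟨le_rfl, hQ⟩, squarefree_one, by simp⟩⟩
  have := Nat.totient_pos.2 (mem_sieveD.1 hq).1.1
  positivity

/-- Selberg weights. -/
noncomputable def sieveL (d Q q : ℕ) : ℝ :=
  (ArithmeticFunction.moebius q : ℝ) * q / sieveG d Q *
    ∑ e ∈ (sieveD d Q).filter (fun e => q ∣ e), 1 / (Nat.totient e : ℝ)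

lemma sieveL_one (d Q : ℕ) (hQ : 1 ≤ Q) : sieveL d Q 1 = 1 := by
  have := sieveG_pos d Q hQ
  simp only [sieveL, one_dvd, Finset.filter_true]
  change _ * sieveG d Q = 1
  simp
  field_simp

lemma sieve_aux (d Q q : ℕ) (hq : q ∈ sieveD d Q) :
    (q : ℝ) * ∑ e ∈ (sieveD d Q).filter (fun e => q ∣ e), 1 / (Nat.totient e : ℝ) ≤ sieveG d Q := by
  have hq0 := (mem_sieveD.1 hq).1.1
  have e1 : (q : ℝ) * ∑ e ∈ (sieveD d Q).filter (fun e => q ∣ e), 1 / (Nat.totient e : ℝ) =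
      ∑ le ∈ q.divisors ×ˢ (sieveD d Q).filter (fun e => q ∣ e),
        1 / (Nat.totient (le.2 / le.1) : ℝ) := by
    have : (q : ℝ) = ∑ l ∈ q.divisors, (Nat.totient l : ℝ) := by
      exact_mod_cast (Nat.sum_totient q).symm
    rw [this, Finset.sum_mul_sum, Finset.sum_product]
    refine Finset.sum_congr rfl fun l hl => Finset.sum_congr rfl fun e he => ?_
    rw [Finset.mem_filter, mem_sieveD] at he
    have hle : l ∣ e := (Nat.dvd_of_mem_divisors hl).trans he.2
    obtain ⟨t, rfl⟩ := hle
    have hl0 : 0 < l := Nat.pos_of_mem_divisors hl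
    have hcop : Nat.Coprime l t := Nat.coprime_of_squarefree_mul he.1.2.1
    rw [Nat.mul_div_cancel_left _ hl0, Nat.totient_mul hcop]
    have h1 := Nat.totient_pos.2 hl0
    push_cast
    field_simp
  rw [e1]
  have inj : Set.InjOn (fun le : ℕ × ℕ => le.2 / le.1)
      (q.divisors ×ˢ (sieveD d Q).filter (fun e => q ∣ e) : Finset (ℕ × ℕ)) := by
    have key : ∀ l e, l ∣ q → e ∈ sieveD d Q → q ∣ e → Nat.gcd (e / l) q = q / l := by
      intro l e hl he hqe
      obtain ⟨t, rfl⟩ := hl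
      obtain ⟨r, rfl⟩ := hqe
      have hl0 : 0 < l := Nat.pos_of_mul_pos_right hq0
      rw [mul_assoc, Nat.mul_div_cancel_left _ hl0, Nat.mul_div_cancel_left _ hl0, mul_comm l t,
        Nat.gcd_mul_left]
      have hs := (mem_sieveD.1 he).2.1
      have : Nat.Coprime r l := (Nat.coprime_of_squarefree_mul hs).symm.coprime_dvd_right ⟨t, rfl⟩
      rw [this.gcd_eq_one, mul_one]
    rintro ⟨l, e⟩ h ⟨l', e'⟩ h' heq
    simp only [Finset.coe_product, Set.mem_prod, Finset.mem_coe, Nat.mem_divisors,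
      Finset.mem_filter] at h h'
    simp only at heq
    have h1 := key l e h.1.1 h.2.1 h.2.2
    have h2 := key l' e' h'.1.1 h'.2.1 h'.2.2
    rw [heq, h2] at h1
    have h3 : l = l' := by
      have a1 := Nat.div_mul_cancel h.1.1
      have a2 := Nat.div_mul_cancel h'.1.1
      rw [← h1] at a1
      have : 0 < q / l' := by
        rcases Nat.eq_zero_or_pos (q / l') with h0 | h0
        · rw [h0] at a2; omega
        · exact h0
      exact Nat.eq_of_mul_eq_mul_left this (a1.trans a2.symm)
    subst h3
    have h4 : e = e' := (Nat.div_left_inj (h.1.1.trans h.2.2) (h.1.1.trans h'.2.2)).1 heq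
    rw [h4]
  rw [← Finset.sum_image (f := fun n => 1 / (Nat.totient n : ℝ)) inj]
  refine Finset.sum_le_sum_of_subset_of_nonneg ?_ (fun _ _ _ => by positivity)
  intro n hn
  simp only [Finset.mem_image, Finset.mem_product, Nat.mem_divisors, Finset.mem_filter] at hn
  obtain ⟨⟨l, e⟩, ⟨h1, h2⟩, rfl⟩ := hn
  exact sieveD_of_dvd h2.1 (Nat.div_dvd_of_dvd (h1.1.trans h2.2))

lemma sieveL_abs (d Q q : ℕ) (hQ : 1 ≤ Q) (hq : q ∈ sieveD d Q) : |sieveL d Q q| ≤ 1 := by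
  have hG := sieveG_pos d Q hQ
  have h := sieve_aux d Q q hq
  have hmu : |(ArithmeticFunction.moebius q : ℝ)| ≤ 1 := by
    exact_mod_cast ArithmeticFunction.abs_moebius_le_one
  have hs : 0 ≤ ∑ e ∈ (sieveD d Q).filter (fun e => q ∣ e), 1 / (Nat.totient e : ℝ) :=
    Finset.sum_nonneg fun _ _ => by positivity
  have e : sieveL d Q q = (ArithmeticFunction.moebius q : ℝ) * (((q : ℝ) *
    ∑ e ∈ (sieveD d Q).filter (fun e => q ∣ e), 1 / (Nat.totient e : ℝ)) / sieveG d Q) := by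
    rw [sieveL]; ring
  rw [e, abs_mul]
  refine mul_le_one₀ hmu (abs_nonneg _) ?_
  rw [abs_of_nonneg (by positivity), div_le_one hG]
  exact h

lemma moebius_between (e f : ℕ) (hf : Squarefree f) (hef : e ∣ f) :
    ∑ q ∈ f.divisors.filter (fun q => e ∣ q), (ArithmeticFunction.moebius q : ℝ) =
      if f = e then (ArithmeticFunction.moebius e : ℝ) else 0 := by
  obtain ⟨t, rfl⟩ := hef
  have he0 : e ≠ 0 := by rintro rfl; simp at hf
  have ht0 : t ≠ 0 := by rintro rfl; simp at hf
  have hset : (e * t).divisors.filter (fun q => e ∣ q) = t.divisors.image (fun s => e * s) := by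
    ext q
    simp only [Finset.mem_filter, Nat.mem_divisors, Finset.mem_image]
    constructor
    · rintro ⟨⟨h1, h2⟩, s, rfl⟩
      exact ⟨s, ⟨Nat.dvd_of_mul_dvd_mul_left (Nat.pos_of_ne_zero he0) h1, ht0⟩, rfl⟩
    · rintro ⟨s, ⟨h1, h2⟩, rfl⟩
      exact ⟨⟨Nat.mul_dvd_mul_left _ h1, by positivity⟩, dvd_mul_right _ _⟩
  rw [hset, Finset.sum_image (by
    intro a _ b _ h
    exact Nat.eq_of_mul_eq_mul_left (Nat.pos_of_ne_zero he0) h)]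
  have hcop : Nat.Coprime e t := Nat.coprime_of_squarefree_mul hf
  have : ∀ s ∈ t.divisors, (ArithmeticFunction.moebius (e * s) : ℝ) =
      ArithmeticFunction.moebius e * ArithmeticFunction.moebius s := by
    intro s hs
    rw [ArithmeticFunction.isMultiplicative_moebius.map_mul_of_coprime
      (hcop.coprime_dvd_right (Nat.dvd_of_mem_divisors hs))]
    push_cast; rfl
  rw [Finset.sum_congr rfl this, ← Finset.mul_sum]
  have h : ∑ i ∈ t.divisors, (ArithmeticFunction.moebius i : ℝ) = if t = 1 then 1 else 0 := by
    have h1 : ∑ i ∈ t.divisors, ArithmeticFunction.moebius i = if t = 1 then 1 else 0 := by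
      rw [← ArithmeticFunction.coe_mul_zeta_apply, ArithmeticFunction.moebius_mul_coe_zeta,
        ArithmeticFunction.one_apply]
    exact_mod_cast h1
  rw [h]
  by_cases h1 : t = 1
  · simp [h1]
  · rw [if_neg h1, if_neg, mul_zero]
    intro h2
    exact h1 (Nat.eq_of_mul_eq_mul_left (Nat.pos_of_ne_zero he0) (by rw [h2, mul_one]))

lemma sieve_y (d Q e : ℕ) (he : e ∈ sieveD d Q) :
    ∑ q ∈ (sieveD d Q).filter (fun q => e ∣ q), sieveL d Q q / q =
      (ArithmeticFunction.moebius e : ℝ) / (sieveG d Q * Nat.totient e) := by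
  have e1 : ∀ q ∈ (sieveD d Q).filter (fun q => e ∣ q), sieveL d Q q / q =
      ∑ f ∈ sieveD d Q, if q ∣ f then (ArithmeticFunction.moebius q : ℝ) / (sieveG d Q * Nat.totient f)
        else 0 := by
    intro q hq
    have hq0 : (q : ℝ) ≠ 0 := by
      have := (mem_sieveD.1 (Finset.mem_filter.1 hq).1).1.1
      positivity
    rw [sieveL, Finset.sum_filter, Finset.mul_sum, Finset.sum_div]
    refine Finset.sum_congr rfl fun f _ => ?_
    split_ifs
    · field_simp
    · simp
  rw [Finset.sum_congr rfl e1, Finset.sum_comm]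
  have e2 : ∀ f ∈ sieveD d Q, (∑ q ∈ (sieveD d Q).filter (fun q => e ∣ q),
      if q ∣ f then (ArithmeticFunction.moebius q : ℝ) / (sieveG d Q * Nat.totient f) else 0) =
      if f = e then (ArithmeticFunction.moebius e : ℝ) / (sieveG d Q * Nat.totient e) else 0 := by
    intro f hf
    rw [← Finset.sum_filter, ← Finset.sum_div]
    by_cases hef : e ∣ f
    · have hset : ((sieveD d Q).filter (fun q => e ∣ q)).filter (fun q => q ∣ f) =
          f.divisors.filter (fun q => e ∣ q) := by
        ext q
        simp only [Finset.mem_filter, Nat.mem_divisors]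
        have hf0 : f ≠ 0 := by have := (mem_sieveD.1 hf).1.1; omega
        constructor
        · rintro ⟨⟨_, h1⟩, h2⟩; exact ⟨⟨h2, hf0⟩, h1⟩
        · rintro ⟨⟨h2, _⟩, h1⟩; exact ⟨⟨sieveD_of_dvd hf h2, h1⟩, h2⟩
      rw [hset, moebius_between e f (mem_sieveD.1 hf).2.1 hef]
      split_ifs with h
      · rw [h]
      · simp
    · have hset : ((sieveD d Q).filter (fun q => e ∣ q)).filter (fun q => q ∣ f) = ∅ := by
        ext q
        simp only [Finset.mem_filter, Finset.notMem_empty, iff_false]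
        rintro ⟨⟨_, h1⟩, h2⟩
        exact hef (h1.trans h2)
      rw [hset, if_neg (by rintro rfl; exact hef dvd_rfl)]
      simp
  rw [Finset.sum_congr rfl e2, Finset.sum_ite_eq' , if_pos he]

lemma sieve_main (d Q : ℕ) (hQ : 1 ≤ Q) :
    ∑ q₁ ∈ sieveD d Q, ∑ q₂ ∈ sieveD d Q,
      sieveL d Q q₁ * sieveL d Q q₂ / (Nat.lcm q₁ q₂ : ℝ) = 1 / sieveG d Q := by
  have hG := sieveG_pos d Q hQ
  have e1 : ∀ q₁ ∈ sieveD d Q, ∀ q₂ ∈ sieveD d Q,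
      sieveL d Q q₁ * sieveL d Q q₂ / (Nat.lcm q₁ q₂ : ℝ) =
      ∑ e ∈ sieveD d Q, (Nat.totient e : ℝ) * ((if e ∣ q₁ then sieveL d Q q₁ / q₁ else 0) *
        (if e ∣ q₂ then sieveL d Q q₂ / q₂ else 0)) := by
    intro q₁ h₁ q₂ h₂
    have p1 : 0 < q₁ := (mem_sieveD.1 h₁).1.1
    have p2 : 0 < q₂ := (mem_sieveD.1 h₂).1.1
    have hg : (Nat.gcd q₁ q₂ : ℝ) = ∑ e ∈ sieveD d Q, if e ∣ q₁ ∧ e ∣ q₂ then (Nat.totient e : ℝ) else 0 := by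
      rw [← Finset.sum_filter]
      have hset : (sieveD d Q).filter (fun e => e ∣ q₁ ∧ e ∣ q₂) = (Nat.gcd q₁ q₂).divisors := by
        ext e
        simp only [Finset.mem_filter, Nat.mem_divisors, Nat.dvd_gcd_iff]
        constructor
        · rintro ⟨_, h⟩; exact ⟨h, (Nat.gcd_pos_of_pos_left _ p1).ne'⟩
        · rintro ⟨h, _⟩; exact ⟨sieveD_of_dvd h₁ h.1, h⟩
      rw [hset]
      exact_mod_cast (Nat.sum_totient _).symm
    have hl : (Nat.lcm q₁ q₂ : ℝ) = q₁ * q₂ / (Nat.gcd q₁ q₂ : ℝ) := by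
      have := Nat.gcd_mul_lcm q₁ q₂
      have hgp : (0 : ℝ) < Nat.gcd q₁ q₂ := by exact_mod_cast Nat.gcd_pos_of_pos_left _ p1
      rw [eq_div_iff hgp.ne', mul_comm]
      exact_mod_cast this
    have : sieveL d Q q₁ * sieveL d Q q₂ / (Nat.lcm q₁ q₂ : ℝ) =
        (Nat.gcd q₁ q₂ : ℝ) * (sieveL d Q q₁ / q₁ * (sieveL d Q q₂ / q₂)) := by
      rw [hl]; field_simp
    rw [this, hg, Finset.sum_mul]
    refine Finset.sum_congr rfl fun e _ => ?_
    by_cases a : e ∣ q₁ <;> by_cases b : e ∣ q₂ <;> simp [a, b]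
  rw [Finset.sum_congr rfl fun q₁ h₁ => Finset.sum_congr rfl fun q₂ h₂ => e1 q₁ h₁ q₂ h₂]
  rw [Finset.sum_congr rfl fun q₁ _ => Finset.sum_comm, Finset.sum_comm]
  have e2 : ∀ e ∈ sieveD d Q, (∑ q₁ ∈ sieveD d Q, ∑ q₂ ∈ sieveD d Q,
      (Nat.totient e : ℝ) * ((if e ∣ q₁ then sieveL d Q q₁ / q₁ else 0) *
        (if e ∣ q₂ then sieveL d Q q₂ / q₂ else 0))) =
      1 / sieveG d Q ^ 2 * (1 / Nat.totient e) := by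
    intro e he
    have hy := sieve_y d Q e he
    rw [Finset.sum_filter] at hy
    simp_rw [← Finset.mul_sum]
    rw [← Finset.sum_mul, hy]
    have hφ : (0 : ℝ) < Nat.totient e := by
      exact_mod_cast Nat.totient_pos.2 (mem_sieveD.1 he).1.1
    have hmu : (ArithmeticFunction.moebius e : ℝ) ^ 2 = 1 := by
      exact_mod_cast ArithmeticFunction.moebius_sq_eq_one_of_squarefree (mem_sieveD.1 he).2.1
    field_simp
    exact hmu
  rw [Finset.sum_congr rfl e2, ← Finset.mul_sum]
  change _ * sieveG d Q = _
  field_simp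

lemma class_exists (d q : ℕ) (hq : 0 < q) (h : Nat.Coprime q d) :
    ∃ r : ℕ, ∀ k : ℕ, q ∣ k * d + 1 ↔ k ≡ r [MOD q] := by
  obtain ⟨u, hu⟩ : ∃ u : ℕ, u * d ≡ 1 [MOD q] := by
    rcases Nat.lt_or_ge 1 q with h1 | h1
    · obtain ⟨u, hu⟩ := Nat.exists_mul_mod_eq_one_of_coprime h.symm h1
      exact ⟨u, by rw [mul_comm, Nat.ModEq, hu.2, Nat.mod_eq_of_lt h1]⟩
    · have : q = 1 := by omega
      subst this
      exact ⟨0, Nat.modEq_one⟩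
  have hr : q ∣ (q - 1) * u * d + 1 := by
    have h2 : (q - 1) * u * d + 1 ≡ (q - 1) * 1 + 1 [MOD q] := by
      rw [mul_assoc]
      exact (Nat.ModEq.mul_left _ hu).add_right 1
    have h3 : (q - 1) * 1 + 1 = q := by omega
    rw [h3] at h2
    exact (Nat.modEq_zero_iff_dvd.1 (h2.trans (by simp [Nat.ModEq])))
  refine ⟨(q - 1) * u, fun k => ⟨fun hk => ?_, fun hk => ?_⟩⟩
  · have : k * d + 1 ≡ (q - 1) * u * d + 1 [MOD q] :=
      (Nat.modEq_zero_iff_dvd.2 hk).trans (Nat.modEq_zero_iff_dvd.2 hr).symm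
    have := Nat.ModEq.add_right_cancel' 1 this
    exact Nat.ModEq.cancel_right_of_coprime h this
  · have : k * d + 1 ≡ (q - 1) * u * d + 1 [MOD q] := (hk.mul_right d).add_right 1
    exact Nat.modEq_zero_iff_dvd.1 (this.trans (Nat.modEq_zero_iff_dvd.2 hr))

/-- The Selberg upper bound sieve for the weights `1/k`. -/
lemma selberg_step (d Q : ℕ) (A B : ℝ) (hA : 0 < A) (hAB : A ≤ B) (hd : 0 < d) (hQ : 1 ≤ Q)
    (hQA : (Q : ℝ) ≤ A) :
    ∑ k ∈ (Finset.Ioc ⌊A⌋₊ ⌊B⌋₊).filter (fun k => (k * d + 1).Prime), (1 : ℝ) / k ≤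
      Real.log (B / A) / sieveG d Q + (Q : ℝ) ^ 2 / A := by
  set I := Finset.Ioc ⌊A⌋₊ ⌊B⌋₊ with hI
  set D := sieveD d Q with hD
  have hcard : (D.card : ℝ) ≤ Q := by
    have : D.card ≤ (Finset.Icc 1 Q).card := Finset.card_filter_le _ _
    rw [Nat.card_Icc] at this
    exact_mod_cast this
  have s1 : ∑ k ∈ I.filter (fun k => (k * d + 1).Prime), (1 : ℝ) / k ≤
      ∑ k ∈ I, (1 / (k : ℝ)) * (∑ q ∈ D, if q ∣ k * d + 1 then sieveL d Q q else 0) ^ 2 := by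
    rw [Finset.sum_filter]
    refine Finset.sum_le_sum fun k hk => ?_
    split_ifs with hp
    · have hk1 : (A : ℝ) < k := (Nat.floor_lt hA.le).1 (Finset.mem_Ioc.1 hk).1
      have hQk : Q < k := by exact_mod_cast hQA.trans_lt hk1
      have : (∑ q ∈ D, if q ∣ k * d + 1 then sieveL d Q q else 0) = 1 := by
        have h1D : 1 ∈ D := mem_sieveD.2 ⟨⟨le_rfl, hQ⟩, squarefree_one, by simp⟩
        rw [Finset.sum_eq_single_of_mem 1 h1D, if_pos (one_dvd _), sieveL_one d Q hQ]
        intro q hq hq1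
        rw [if_neg]
        intro hdv
        rcases (Nat.dvd_prime hp).1 hdv with h | h
        · exact hq1 h
        · have := (mem_sieveD.1 hq).1.2
          nlinarith
      rw [this]; simp
    · positivity
  refine s1.trans ?_
  have s2 : ∑ k ∈ I, (1 / (k : ℝ)) * (∑ q ∈ D, if q ∣ k * d + 1 then sieveL d Q q else 0) ^ 2 =
      ∑ q₁ ∈ D, ∑ q₂ ∈ D, sieveL d Q q₁ * sieveL d Q q₂ *
        ∑ k ∈ I.filter (fun k => Nat.lcm q₁ q₂ ∣ k * d + 1), (1 : ℝ) / k := by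
    have : ∀ k ∈ I, (1 / (k : ℝ)) * (∑ q ∈ D, if q ∣ k * d + 1 then sieveL d Q q else 0) ^ 2 =
        ∑ q₁ ∈ D, ∑ q₂ ∈ D, sieveL d Q q₁ * sieveL d Q q₂ *
          (if Nat.lcm q₁ q₂ ∣ k * d + 1 then (1 : ℝ) / k else 0) := by
      intro k _
      rw [sq, Finset.sum_mul_sum, Finset.mul_sum]
      refine Finset.sum_congr rfl fun q₁ _ => ?_
      rw [Finset.mul_sum]
      refine Finset.sum_congr rfl fun q₂ _ => ?_
      simp only [Nat.lcm_dvd_iff]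
      by_cases a : q₁ ∣ k * d + 1 <;> by_cases b : q₂ ∣ k * d + 1 <;> simp [a, b]
      ring
    rw [Finset.sum_congr rfl this, Finset.sum_comm]
    refine Finset.sum_congr rfl fun q₁ _ => ?_
    rw [Finset.sum_comm]
    refine Finset.sum_congr rfl fun q₂ _ => ?_
    rw [← Finset.mul_sum, Finset.sum_filter]
  rw [s2]
  have s3 : ∀ q₁ ∈ D, ∀ q₂ ∈ D, sieveL d Q q₁ * sieveL d Q q₂ *
        ∑ k ∈ I.filter (fun k => Nat.lcm q₁ q₂ ∣ k * d + 1), (1 : ℝ) / k ≤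
        Real.log (B / A) * (sieveL d Q q₁ * sieveL d Q q₂ / (Nat.lcm q₁ q₂ : ℝ)) + 1 / A := by
    intro q₁ h₁ q₂ h₂
    have hcop : Nat.Coprime (Nat.lcm q₁ q₂) d :=
      Nat.Coprime.coprime_dvd_left (Nat.lcm_dvd_mul q₁ q₂)
        (Nat.Coprime.mul_left (mem_sieveD.1 h₁).2.2 (mem_sieveD.1 h₂).2.2)
    have hpos : 0 < Nat.lcm q₁ q₂ := Nat.lcm_pos (mem_sieveD.1 h₁).1.1 (mem_sieveD.1 h₂).1.1
    obtain ⟨r, hr⟩ := class_exists d _ hpos hcop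
    have hb := ap_bound A B hA hAB _ r hpos
    rw [← hI] at hb
    simp_rw [hr]
    set S := ∑ k ∈ I.filter (fun k => k ≡ r [MOD Nat.lcm q₁ q₂]), (1 : ℝ) / k
    set c := sieveL d Q q₁ * sieveL d Q q₂
    have hc : |c| ≤ 1 := by
      rw [abs_mul]
      exact mul_le_one₀ (sieveL_abs d Q q₁ hQ h₁) (abs_nonneg _) (sieveL_abs d Q q₂ hQ h₂)
    have e : c * S = Real.log (B / A) * (c / (Nat.lcm q₁ q₂ : ℝ)) +
        c * (S - Real.log (B / A) / (Nat.lcm q₁ q₂ : ℝ)) := by ring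
    rw [e]
    gcongr
    refine (le_abs_self _).trans ?_
    rw [abs_mul]
    calc _ ≤ 1 * (1 / A) := by gcongr
      _ = _ := one_mul _
  calc _ ≤ ∑ q₁ ∈ D, ∑ q₂ ∈ D, (Real.log (B / A) * (sieveL d Q q₁ * sieveL d Q q₂ /
        (Nat.lcm q₁ q₂ : ℝ)) + 1 / A) :=
        Finset.sum_le_sum fun q₁ h₁ => Finset.sum_le_sum fun q₂ h₂ => s3 q₁ h₁ q₂ h₂
    _ = Real.log (B / A) * (1 / sieveG d Q) + (D.card : ℝ) ^ 2 / A := by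
        rw [← sieve_main d Q hQ]
        simp_rw [Finset.sum_add_distrib, Finset.mul_sum]
        simp
        ring
    _ ≤ _ := by
        rw [mul_one_div]
        gcongr

lemma selberg_step' (d Q : ℕ) (A B : ℝ) (hA : 0 < A) (hAB : A ≤ B) (hd : 0 < d) (hQ : 6 ≤ Q)
    (hQA : (Q : ℝ) ≤ A) :
    ∑ k ∈ (Finset.Ioc ⌊A⌋₊ ⌊B⌋₊).filter (fun k => (k * d + 1).Prime), (1 : ℝ) / k ≤
      (d / Nat.totient d) * (Real.log (B / A) / (Real.log (Q + 1) + 1 / 2) + (Q : ℝ) ^ 2 / A) := by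
  refine (selberg_step d Q A B hA hAB hd (by omega) hQA).trans ?_
  have hG := sieveG_pos d Q (by omega)
  have hφ : (0 : ℝ) < Nat.totient d := by exact_mod_cast Nat.totient_pos.2 hd
  have hφd : (Nat.totient d : ℝ) ≤ d := by exact_mod_cast Nat.totient_le d
  have hr : 1 ≤ (d : ℝ) / Nat.totient d := by rwa [le_div_iff₀ hφ, one_mul]
  have hH := harmonic_le_sieveG d Q hd
  have hH2 : Real.log (Q + 1) + 1 / 2 ≤ ∑ n ∈ Finset.Icc 1 Q, (1 : ℝ) / n := by
    have h1 := Real.strictMono_eulerMascheroniSeq.monotone hQ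
    have h2 := Real.one_half_lt_eulerMascheroniSeq_six
    have h3 : Real.eulerMascheroniSeq Q = (harmonic Q : ℝ) - Real.log (Q + 1) := rfl
    have h4 : (harmonic Q : ℝ) = ∑ n ∈ Finset.Icc 1 Q, (1 : ℝ) / n := by
      rw [harmonic_eq_sum_Icc]
      push_cast
      simp
    rw [← h4]
    linarith
  have hlog : 0 < Real.log (Q + 1) + 1 / 2 := by
    have : 0 ≤ Real.log ((Q : ℝ) + 1) := Real.log_nonneg (by linarith [Nat.cast_nonneg (α := ℝ) Q])
    linarith
  have hlBA : 0 ≤ Real.log (B / A) := Real.log_nonneg (by rwa [le_div_iff₀ hA, one_mul])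
  rw [mul_add]
  refine add_le_add ?_ ?_
  · rw [mul_div_assoc', div_le_div_iff₀ hG hlog]
    have : Real.log (Q + 1) + 1 / 2 ≤ (d / Nat.totient d) * sieveG d Q := hH2.trans hH
    calc _ ≤ Real.log (B / A) * ((d / Nat.totient d) * sieveG d Q) := by gcongr
      _ = _ := by ring
  · have : 0 ≤ (Q : ℝ) ^ 2 / A := by positivity
    nlinarith

/-- The sum over the first `K` multipliers. -/
noncomputable def gsum (d : ℕ) (K : ℝ) : ℝ :=
  ∑ k ∈ (Finset.Ioc 0 ⌊K⌋₊).filter (fun k => (k * d + 1).Prime), (1 : ℝ) / k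

lemma gsum_add (d : ℕ) (A B : ℝ) (hAB : A ≤ B) :
    gsum d B = gsum d A +
      ∑ k ∈ (Finset.Ioc ⌊A⌋₊ ⌊B⌋₊).filter (fun k => (k * d + 1).Prime), (1 : ℝ) / k := by
  have h : ⌊A⌋₊ ≤ ⌊B⌋₊ := Nat.floor_le_floor hAB
  rw [gsum, gsum, ← Finset.Ioc_union_Ioc_eq_Ioc (Nat.zero_le _) h, Finset.filter_union,
    Finset.sum_union]
  rw [Finset.disjoint_left]
  intro x hx hy
  simp only [Finset.mem_filter, Finset.mem_Ioc] at hx hy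
  omega

lemma gsum_mono (d : ℕ) (A B : ℝ) (hAB : A ≤ B) : gsum d A ≤ gsum d B := by
  rw [gsum_add d A B hAB]
  have : 0 ≤ ∑ k ∈ (Finset.Ioc ⌊A⌋₊ ⌊B⌋₊).filter (fun k => (k * d + 1).Prime), (1 : ℝ) / k :=
    Finset.sum_nonneg fun _ _ => by positivity
  linarith

def chkSum (e : ℕ) : ℕ → ℕ
  | 0 => 0
  | k + 1 => chkSum e k + if Nat.gcd ((k + 1) * e + 1) 210 = 1 then 1000000 / (k + 1) + 1 else 0

def chkCnt (e : ℕ) : ℕ → ℕ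
  | 0 => 0
  | k + 1 => chkCnt e k + if Nat.gcd (k * e + 1) 210 = 1 then 1 else 0

set_option maxRecDepth 100000 in
lemma chk_sum : ∀ e < 210, Nat.totient (Nat.gcd e 210) * chkSum e 420 ≤ 1802000 * Nat.gcd e 210 := by
  decide +kernel

set_option maxRecDepth 100000 in
lemma chk_cnt : ∀ e < 210, Nat.totient (Nat.gcd e 210) * chkCnt e 210 ≤ 48 * Nat.gcd e 210 := by
  decide +kernel

lemma chkSum_ge (e n : ℕ) :
    ∑ k ∈ (Finset.Ioc 0 n).filter (fun k => Nat.gcd (k * e + 1) 210 = 1), (1 : ℝ) / k ≤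
      chkSum e n / 1000000 := by
  induction n with
  | zero => simp [chkSum]
  | succ n ih =>
    rw [Finset.sum_filter] at ih ⊢
    rw [Finset.sum_Ioc_succ_top (Nat.zero_le n), chkSum]
    push_cast
    rw [add_div]
    refine add_le_add ih ?_
    split_ifs
    · have h := Nat.lt_mul_div_succ 1000000 (show 0 < n + 1 by omega)
      have h' : (1000000 : ℝ) < (n + 1) * (((1000000 / (n + 1) : ℕ) : ℝ) + 1) := by exact_mod_cast h
      generalize (1000000 / (n + 1) : ℕ) = w at h'
      push_cast
      rw [div_le_div_iff₀ (by positivity) (by norm_num), one_mul, mul_comm]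
      exact h'.le
    · simp

lemma chkCnt_eq (e n : ℕ) :
    ((Finset.range n).filter (fun k => Nat.gcd (k * e + 1) 210 = 1)).card = chkCnt e n := by
  induction n with
  | zero => simp [chkCnt]
  | succ n ih =>
    rw [Finset.range_add_one, Finset.filter_insert, chkCnt]
    split_ifs
    · rw [Finset.card_insert_of_notMem (by simp), ih]
    · simpa using ih

lemma totient_mul_le' (t : ℕ) : ∀ g : ℕ, Nat.totient (t * g) ≤ t * Nat.totient g := by
  induction t using induction_on_primes with
  | zero => simp
  | one => simp
  | prime_mul p a hp ih =>
    intro g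
    have h : Nat.totient (p * (a * g)) ≤ p * Nat.totient (a * g) := by
      by_cases hd : p ∣ a * g
      · rw [Nat.totient_mul_of_prime_of_dvd hp hd]
      · rw [Nat.totient_mul_of_prime_of_not_dvd hp hd]
        exact Nat.mul_le_mul_right _ (Nat.sub_le _ _)
    rw [mul_assoc, mul_assoc]
    exact h.trans (Nat.mul_le_mul_left _ (ih g))

lemma totient_ratio (d : ℕ) (hd : 0 < d) :
    (Nat.gcd d 210 : ℝ) / Nat.totient (Nat.gcd d 210) ≤ d / Nat.totient d := by
  obtain ⟨t, ht⟩ := Nat.gcd_dvd_left d 210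
  set g := Nat.gcd d 210
  have hg : 0 < g := Nat.gcd_pos_of_pos_left _ hd
  have h1 : Nat.totient d ≤ Nat.totient g * t := by
    rw [ht, Nat.mul_comm g t, Nat.mul_comm (Nat.totient g) t]
    exact totient_mul_le' t g
  have p1 : 0 < Nat.totient g := Nat.totient_pos.2 hg
  have p2 : 0 < Nat.totient d := Nat.totient_pos.2 hd
  rw [div_le_div_iff₀ (by positivity) (by positivity)]
  have : g * Nat.totient d ≤ d * Nat.totient g := by
    conv_rhs => rw [ht]
    calc g * Nat.totient d ≤ g * (Nat.totient g * t) := Nat.mul_le_mul_left _ h1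
      _ = _ := by ring
  exact_mod_cast this

lemma gcd_mod_eq (d k : ℕ) : Nat.gcd (k * d + 1) 210 = Nat.gcd (k * (d % 210) + 1) 210 := by
  have h : k * d + 1 ≡ k * (d % 210) + 1 [MOD 210] :=
    ((Nat.mod_modEq d 210).symm.mul_left k).add_right 1
  exact h.gcd_eq

lemma prime_coprime (d k : ℕ) (hd : 40 ≤ d) (hk : 0 < k) (hp : (k * d + 1).Prime) :
    Nat.gcd (k * d + 1) 210 = 1 := by
  rw [← Nat.coprime_iff_gcd_eq_one, Nat.Prime.coprime_iff_not_dvd hp]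
  intro h
  have h1 : 40 < k * d + 1 := by nlinarith
  have h2 : (210 : ℕ) = 2 * 3 * 5 * 7 := by norm_num
  rw [h2] at h
  rcases (hp.dvd_mul).1 h with h | h
  · rcases (hp.dvd_mul).1 h with h | h
    · rcases (hp.dvd_mul).1 h with h | h
      · have := Nat.le_of_dvd (by norm_num) h; omega
      · have := Nat.le_of_dvd (by norm_num) h; omega
    · have := Nat.le_of_dvd (by norm_num) h; omega
  · have := Nat.le_of_dvd (by norm_num) h; omega

lemma gsum_420 (d : ℕ) (hd : 40 ≤ d) : gsum d 420 ≤ d / Nat.totient d * 1.802 := by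
  have h420 : ⌊(420 : ℝ)⌋₊ = 420 := by norm_num
  set e := d % 210 with he
  have hg : Nat.gcd e 210 = Nat.gcd d 210 := (Nat.mod_modEq d 210).gcd_eq
  have h1 : gsum d 420 ≤ chkSum e 420 / 1000000 := by
    refine le_trans ?_ (chkSum_ge e 420)
    rw [gsum, h420]
    refine Finset.sum_le_sum_of_subset_of_nonneg ?_ (fun _ _ _ => by positivity)
    intro k hk
    rw [Finset.mem_filter] at hk ⊢
    refine ⟨hk.1, ?_⟩
    rw [he, ← gcd_mod_eq]
    exact prime_coprime d k hd (Finset.mem_Ioc.1 hk.1).1 hk.2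
  have h2 := chk_sum e (Nat.mod_lt _ (by norm_num))
  rw [hg] at h2
  have h3 := totient_ratio d (by omega)
  have p1 : (0 : ℝ) < Nat.totient (Nat.gcd d 210) := by
    exact_mod_cast Nat.totient_pos.2 (Nat.gcd_pos_of_pos_left _ (by omega))
  have h2' : (Nat.totient (Nat.gcd d 210) : ℝ) * chkSum e 420 ≤ 1802000 * Nat.gcd d 210 := by
    exact_mod_cast h2
  have h4 : (chkSum e 420 : ℝ) / 1000000 ≤ (Nat.gcd d 210 : ℝ) / Nat.totient (Nat.gcd d 210) * 1.802 := by
    rw [div_mul_eq_mul_div, div_le_div_iff₀ (by norm_num) p1]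
    linarith
  calc _ ≤ _ := h1
    _ ≤ _ := h4
    _ ≤ _ := by gcongr

lemma legendre_step (d : ℕ) (hd : 40 ≤ d) (A B : ℝ) (hA : 0 < A) (hAB : A ≤ B) :
    ∑ k ∈ (Finset.Ioc ⌊A⌋₊ ⌊B⌋₊).filter (fun k => (k * d + 1).Prime), (1 : ℝ) / k ≤
      d / Nat.totient d * (48 * (Real.log (B / A) / 210 + 1 / A)) := by
  set e := d % 210 with he
  have hg : Nat.gcd e 210 = Nat.gcd d 210 := (Nat.mod_modEq d 210).gcd_eq
  set I := Finset.Ioc ⌊A⌋₊ ⌊B⌋₊ with hI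
  set R := (Finset.range 210).filter (fun k => Nat.gcd (k * e + 1) 210 = 1) with hR
  have hmaps : ∀ k ∈ I.filter (fun k => (k * d + 1).Prime), k % 210 ∈ R := by
    intro k hk
    rw [Finset.mem_filter, Finset.mem_Ioc] at hk
    rw [hR, Finset.mem_filter, Finset.mem_range]
    refine ⟨Nat.mod_lt _ (by norm_num), ?_⟩
    have h := prime_coprime d k hd (by omega) hk.2
    rw [gcd_mod_eq, ← he] at h
    have h' : k % 210 * e + 1 ≡ k * e + 1 [MOD 210] :=
      ((Nat.mod_modEq k 210).mul_right e).add_right 1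
    rw [h'.gcd_eq]
    exact h
  have hlog : 0 ≤ Real.log (B / A) := Real.log_nonneg (by rwa [le_div_iff₀ hA, one_mul])
  have h1 : ∑ k ∈ I.filter (fun k => (k * d + 1).Prime), (1 : ℝ) / k ≤
      R.card * (Real.log (B / A) / 210 + 1 / A) := by
    rw [← Finset.sum_fiberwise_of_maps_to hmaps, ← nsmul_eq_mul]
    refine Finset.sum_le_card_nsmul _ _ _ fun r _ => ?_
    have hb := (abs_le.1 (ap_bound A B hA hAB 210 r (by norm_num))).2
    have : ∑ k ∈ (I.filter (fun k => (k * d + 1).Prime)).filter (fun k => k % 210 = r), (1 : ℝ) / k ≤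
        ∑ k ∈ I.filter (fun k => k ≡ r [MOD 210]), (1 : ℝ) / k := by
      refine Finset.sum_le_sum_of_subset_of_nonneg ?_ (fun _ _ _ => by positivity)
      intro k hk
      rw [Finset.mem_filter, Finset.mem_filter] at hk
      rw [Finset.mem_filter]
      refine ⟨hk.1.1, ?_⟩
      rw [← hk.2]
      exact (Nat.mod_modEq k 210).symm
    push_cast at hb
    linarith
  have h2 := chk_cnt e (Nat.mod_lt _ (by norm_num))
  rw [hg, ← chkCnt_eq, ← hR] at h2
  have h3 := totient_ratio d (by omega)
  have p1 : (0 : ℝ) < Nat.totient (Nat.gcd d 210) := by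
    exact_mod_cast Nat.totient_pos.2 (Nat.gcd_pos_of_pos_left _ (by omega))
  have h2' : (Nat.totient (Nat.gcd d 210) : ℝ) * R.card ≤ 48 * Nat.gcd d 210 := by
    exact_mod_cast h2
  have h4 : (R.card : ℝ) ≤ (Nat.gcd d 210 : ℝ) / Nat.totient (Nat.gcd d 210) * 48 := by
    rw [div_mul_eq_mul_div, le_div_iff₀ p1]
    linarith
  refine h1.trans ?_
  have : (R.card : ℝ) ≤ d / Nat.totient d * 48 := h4.trans (by gcongr)
  calc _ ≤ (d / Nat.totient d * 48 : ℝ) * (Real.log (B / A) / 210 + 1 / A) := by gcongr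
    _ = _ := by ring
lemma log420 : (6.03 : ℝ) ≤ Real.log 420 := by
  rw [Real.le_log_iff_exp_le (by norm_num)]
  have h1 : Real.exp 6.03 = Real.exp 1 ^ 6 * Real.exp 0.03 := by
    rw [← Real.exp_nat_mul, ← Real.exp_add]; norm_num
  have h2 : Real.exp 1 ^ 6 ≤ 2.7182818286 ^ 6 :=
    pow_le_pow_left₀ (Real.exp_pos _).le Real.exp_one_lt_d9.le 6
  have h3 : Real.exp 0.03 ≤ 1 / 0.97 := by
    have h4 := Real.add_one_le_exp (-0.03 : ℝ)
    rw [Real.exp_neg] at h4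
    rw [le_div_iff₀ (by norm_num)]
    have h5 := Real.exp_pos (0.03 : ℝ)
    have h6 : Real.exp 0.03 * (Real.exp 0.03)⁻¹ = 1 := mul_inv_cancel₀ h5.ne'
    nlinarith
  rw [h1]
  calc _ ≤ (2.7182818286 ^ 6 : ℝ) * (1 / 0.97) := by gcongr
    _ ≤ _ := by norm_num

lemma log13 : (2.56 : ℝ) ≤ Real.log 13 := by
  have h1 : 3 * Real.log 13 = 11 * Real.log 2 + Real.log (2197 / 2048) := by
    have a : Real.log ((13 : ℝ) ^ 3) = 3 * Real.log 13 := by rw [Real.log_pow]; norm_num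
    have b : Real.log ((2 : ℝ) ^ 11) = 11 * Real.log 2 := by rw [Real.log_pow]; norm_num
    rw [← a, ← b, ← Real.log_mul (by norm_num) (by norm_num)]
    norm_num
  have h2 := Real.one_sub_inv_le_log_of_pos (show (0 : ℝ) < 2197 / 2048 by norm_num)
  have h3 := Real.log_two_gt_d9
  norm_num at h2
  linarith

lemma gsum_base (d : ℕ) (hd : 40 ≤ d) (L : ℝ) (hL : Real.log 420 ≤ L) :
    gsum d (Real.exp L) ≤ d / Nat.totient d * (0.54 + 8 / 35 * L) := by
  have hK : (420 : ℝ) ≤ Real.exp L := by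
    rw [← Real.log_le_iff_le_exp (by norm_num)]; exact hL
  have h1 := gsum_420 d hd
  have h2 := legendre_step d hd 420 (Real.exp L) (by norm_num) hK
  rw [gsum_add d 420 _ hK]
  rw [Real.log_div (Real.exp_pos _).ne' (by norm_num), Real.log_exp] at h2
  have h3 := log420
  have hR : (0 : ℝ) ≤ d / Nat.totient d := by positivity
  calc _ ≤ d / Nat.totient d * 1.802 +
        d / Nat.totient d * (48 * ((L - Real.log 420) / 210 + 1 / 420)) := add_le_add h1 h2
    _ = d / Nat.totient d * (1.802 + (48 * ((L - Real.log 420) / 210 + 1 / 420))) := by ring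
    _ ≤ _ := by
      refine mul_le_mul_of_nonneg_left ?_ hR
      linarith

lemma base_num (L : ℝ) (h1 : 12 ≤ L) (h2 : L ≤ 14) :
    0.54 + 8 / 35 * L ≤ 2 * Real.log L - 4 / Real.sqrt L - 5.6 / L := by
  have hL : 0 < L := by linarith
  have hs : 0 < Real.sqrt L := Real.sqrt_pos.2 hL
  have hss : Real.sqrt L * Real.sqrt L = L := Real.mul_self_sqrt hL.le
  have a1 : 1 / Real.sqrt L ≤ (1 / 3.6 + 3.6 / L) / 2 := by
    have : (1 / 3.6 + 3.6 / L) / 2 - 1 / Real.sqrt L =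
        (Real.sqrt L - 3.6) ^ 2 / (7.2 * L) := by
      generalize Real.sqrt L = s at hs hss
      subst hss
      field_simp; ring
    have h : 0 ≤ (Real.sqrt L - 3.6) ^ 2 / (7.2 * L) := by positivity
    linarith
  have a2 : Real.log 13 + 1 - 13 / L ≤ Real.log L := by
    have := Real.one_sub_inv_le_log_of_pos (show 0 < L / 13 by positivity)
    rw [Real.log_div hL.ne' (by norm_num), inv_div] at this
    linarith
  have a3 := log13
  have a4 : 0.54 + 8 / 35 * L + 4 * ((1 / 3.6 + 3.6 / L) / 2) + 5.6 / L ≤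
      2 * (2.56 + 1 - 13 / L) := by
    have e : 2 * (2.56 + 1 - 13 / L) - (0.54 + 8 / 35 * L + 4 * ((1 / 3.6 + 3.6 / L) / 2) + 5.6 / L)
      = ((2 * 3.56 - 0.54 - 2 / 3.6) * L - 8 / 35 * L ^ 2 - 38.8) / L := by
      field_simp; ring
    have : 0 ≤ ((2 * 3.56 - 0.54 - 2 / 3.6) * L - 8 / 35 * L ^ 2 - 38.8) / L := by
      apply div_nonneg _ hL.le
      nlinarith [mul_nonneg (sub_nonneg.2 h1) (sub_nonneg.2 h2)]
    linarith
  have e4 : 4 / Real.sqrt L = 4 * (1 / Real.sqrt L) := by ring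
  rw [e4]
  linarith

lemma final_poly (b : ℝ) (hb : 3.46 ≤ b) :
    4 / (b ^ 2 - b + 0.84) + 4 / b ^ 4 ≤
      4 / (b ^ 2 + 1) + 8 * b / ((b ^ 2 + 1) * (2 * b ^ 2 + 1)) + 11.2 / (b ^ 2 * (b ^ 2 + 2)) := by
  obtain ⟨t, rfl⟩ : ∃ t, b = 3.46 + t := ⟨b - 3.46, by ring⟩
  have ht : 0 ≤ t := by linarith
  set b := 3.46 + t with hbdef
  have p1 : 0 < b ^ 2 - b + 0.84 := by nlinarith
  have pb : 0 < b := by linarith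
  have e : 4 / (b ^ 2 + 1) + 8 * b / ((b ^ 2 + 1) * (2 * b ^ 2 + 1)) + 11.2 / (b ^ 2 * (b ^ 2 + 2))
      - (4 / (b ^ 2 - b + 0.84) + 4 / b ^ 4) =
      ((4 * (2 * b ^ 2 + 1) + 8 * b) * (b ^ 4 * (b ^ 2 + 2) * (b ^ 2 - b + 0.84))
       + 11.2 * (b ^ 2 * ((b ^ 2 + 1) * (2 * b ^ 2 + 1)) * (b ^ 2 - b + 0.84))
       - (4 * b ^ 4 + 4 * (b ^ 2 - b + 0.84)) * ((b ^ 2 + 2) * (b ^ 2 + 1) * (2 * b ^ 2 + 1))) /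
      (b ^ 4 * (b ^ 2 + 2) * (b ^ 2 + 1) * (2 * b ^ 2 + 1) * (b ^ 2 - b + 0.84)) := by
    generalize b ^ 2 - b + 0.84 = q at p1
    field_simp
  have hn : 0 ≤ ((4 * (2 * b ^ 2 + 1) + 8 * b) * (b ^ 4 * (b ^ 2 + 2) * (b ^ 2 - b + 0.84))
       + 11.2 * (b ^ 2 * ((b ^ 2 + 1) * (2 * b ^ 2 + 1)) * (b ^ 2 - b + 0.84))
       - (4 * b ^ 4 + 4 * (b ^ 2 - b + 0.84)) * ((b ^ 2 + 2) * (b ^ 2 + 1) * (2 * b ^ 2 + 1))) := by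
    rw [hbdef]
    ring_nf
    positivity
  have : 0 ≤ ((4 * (2 * b ^ 2 + 1) + 8 * b) * (b ^ 4 * (b ^ 2 + 2) * (b ^ 2 - b + 0.84))
       + 11.2 * (b ^ 2 * ((b ^ 2 + 1) * (2 * b ^ 2 + 1)) * (b ^ 2 - b + 0.84))
       - (4 * b ^ 4 + 4 * (b ^ 2 - b + 0.84)) * ((b ^ 2 + 2) * (b ^ 2 + 1) * (2 * b ^ 2 + 1))) /
      (b ^ 4 * (b ^ 2 + 2) * (b ^ 2 + 1) * (2 * b ^ 2 + 1) * (b ^ 2 - b + 0.84)) :=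
    div_nonneg hn (by positivity)
  linarith

lemma step_num (a : ℝ) (ha : 12 ≤ a) :
    2 / (a / 2 + Real.log 2 - Real.log a + 1 / 2) + 4 / a ^ 2 ≤
      (2 * Real.log (a + 2) - 4 / Real.sqrt (a + 2) - 5.6 / (a + 2)) -
      (2 * Real.log a - 4 / Real.sqrt a - 5.6 / a) := by
  have ha0 : 0 < a := by linarith
  set b := Real.sqrt a with hb
  have hbb : a = b ^ 2 := (Real.sq_sqrt ha0.le).symm
  have hb346 : 3.46 ≤ b := Real.le_sqrt_of_sq_le (by norm_num; linarith)
  have hb0 : 0 < b := by linarith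
  have l2a := Real.log_two_gt_d9
  have l2b := Real.log_two_lt_d9
  -- log a
  have hla : Real.log a ≤ 4 * Real.log 2 - 2 + b / 2 := by
    have h1 : Real.log a = 2 * Real.log b := by rw [hbb, Real.log_pow]; norm_num
    have h2 := Real.log_le_sub_one_of_pos (show 0 < b / 4 by positivity)
    have h4 : Real.log 4 = 2 * Real.log 2 := by
      rw [show (4 : ℝ) = 2 ^ 2 by norm_num, Real.log_pow]; norm_num
    rw [Real.log_div hb0.ne' (by norm_num), h4] at h2
    linarith
  have hq : 0 < b ^ 2 - b + 0.84 := by nlinarith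
  have t1 : 2 / (a / 2 + Real.log 2 - Real.log a + 1 / 2) ≤ 4 / (b ^ 2 - b + 0.84) := by
    have : (b ^ 2 - b + 0.84) / 2 ≤ a / 2 + Real.log 2 - Real.log a + 1 / 2 := by
      rw [hbb] at hla ⊢
      linarith
    calc _ ≤ 2 / ((b ^ 2 - b + 0.84) / 2) :=
          div_le_div_of_nonneg_left (by norm_num) (by positivity) this
      _ = _ := by field_simp; norm_num
  have t2 : 4 / (b ^ 2 + 1) ≤ 2 * Real.log (a + 2) - 2 * Real.log a := by
    have h := Real.le_log_one_add_of_nonneg (show 0 ≤ 2 / a by positivity)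
    have e1 : 1 + 2 / a = (a + 2) / a := by field_simp
    rw [e1, Real.log_div (by positivity) (by positivity)] at h
    have e2 : 2 * (2 / a) / (2 / a + 2) = 2 / (b ^ 2 + 1) := by
      rw [← hbb]; field_simp; ring
    rw [e2] at h
    have e3 : 4 / (b ^ 2 + 1) = 2 * (2 / (b ^ 2 + 1)) := by ring
    rw [e3]; linarith
  have t3 : 8 * b / ((b ^ 2 + 1) * (2 * b ^ 2 + 1)) ≤ 4 / b - 4 / Real.sqrt (a + 2) := by
    set c := Real.sqrt (a + 2) with hc
    have hcc : c ^ 2 = b ^ 2 + 2 := by rw [hc, Real.sq_sqrt (by linarith), hbb]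
    have hc0 : 0 < c := Real.sqrt_pos.2 (by linarith)
    have hcb : c * b ≤ b ^ 2 + 1 := by
      nlinarith [sq_nonneg (c - b)]
    have hcgt : 0 < c + b := by linarith
    have e : 4 / b - 4 / c = 8 / (b * c * (c + b)) := by
      field_simp
      nlinarith
    rw [e, div_le_div_iff₀ (by positivity) (by positivity)]
    have : b * (b * c * (c + b)) ≤ (b ^ 2 + 1) * (2 * b ^ 2 + 1) := by
      have : b * (b * c * (c + b)) = (c * b) * (c * b + b ^ 2) := by ring
      rw [this]
      apply mul_le_mul hcb (by linarith) (by positivity) (by positivity)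
    nlinarith
  have t4 : 5.6 / a - 5.6 / (a + 2) = 11.2 / (b ^ 2 * (b ^ 2 + 2)) := by
    rw [← hbb]; field_simp; ring
  have t5 : 4 / a ^ 2 = 4 / b ^ 4 := by rw [hbb]; ring
  have := final_poly b hb346
  linarith

lemma exp_half (a : ℝ) (ha : 12 ≤ a) : 3 * a ≤ Real.exp (a / 2) := by
  have h1 : Real.exp (a / 2) = Real.exp 1 ^ 6 * Real.exp (a / 2 - 6) := by
    rw [← Real.exp_nat_mul, ← Real.exp_add]; norm_num
  have h2 : (2.7 : ℝ) ^ 6 ≤ Real.exp 1 ^ 6 :=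
    pow_le_pow_left₀ (by norm_num) (by have := Real.exp_one_gt_d9; linarith) 6
  have h3 := Real.add_one_le_exp (a / 2 - 6)
  rw [h1]
  calc 3 * a ≤ (2.7 : ℝ) ^ 6 * (a / 2 - 6 + 1) := by norm_num; linarith
    _ ≤ _ := mul_le_mul h2 h3 (by linarith) (by positivity)

lemma gsum_step (d : ℕ) (hd : 40 ≤ d) (a : ℝ) (ha : 12 ≤ a) :
    gsum d (Real.exp (a + 2)) ≤ gsum d (Real.exp a) +
      d / Nat.totient d * (2 / (a / 2 + Real.log 2 - Real.log a + 1 / 2) + 4 / a ^ 2) := by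
  have hle : Real.exp a ≤ Real.exp (a + 2) := Real.exp_le_exp.2 (by linarith)
  rw [gsum_add d _ _ hle]
  have ha0 : 0 < a := by linarith
  set E := Real.exp (a / 2) with hE
  have hE0 : 0 < E := Real.exp_pos _
  have hEE : Real.exp a = E * E := by rw [hE, ← Real.exp_add]; ring_nf
  have h3 : 3 * a ≤ E := exp_half a ha
  set v := 2 * E / a with hv
  have hv0 : 0 < v := by positivity
  have hv6 : 6 ≤ v := by rw [hv, le_div_iff₀ ha0]; linarith
  have hQ6 : 6 ≤ ⌊v⌋₊ := Nat.le_floor (by exact_mod_cast hv6)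
  have hQv : (⌊v⌋₊ : ℝ) ≤ v := Nat.floor_le hv0.le
  have hvE : v ≤ E := by rw [hv, div_le_iff₀ ha0]; nlinarith
  have hs := selberg_step' d ⌊v⌋₊ (Real.exp a) (Real.exp (a + 2)) (Real.exp_pos _) hle (by omega) hQ6
    (by rw [hEE]; nlinarith)
  have hlog : Real.log (Real.exp (a + 2) / Real.exp a) = 2 := by
    rw [← Real.exp_sub, Real.log_exp]; ring
  rw [hlog] at hs
  have hlv : a / 2 + Real.log 2 - Real.log a ≤ Real.log (⌊v⌋₊ + 1) := by
    have e : Real.log v = a / 2 + Real.log 2 - Real.log a := by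
      rw [hv, Real.log_div (by positivity) ha0.ne', Real.log_mul (by norm_num) hE0.ne', hE, Real.log_exp]
      ring
    rw [← e]
    exact Real.log_le_log hv0 (Nat.lt_floor_add_one v).le
  have hpos : 0 < a / 2 + Real.log 2 - Real.log a + 1 / 2 := by
    have e : Real.log v = a / 2 + Real.log 2 - Real.log a := by
      rw [hv, Real.log_div (by positivity) ha0.ne', Real.log_mul (by norm_num) hE0.ne', hE, Real.log_exp]
      ring
    have := Real.log_nonneg (show 1 ≤ v by linarith)
    linarith
  have hR : (0 : ℝ) ≤ d / Nat.totient d := by positivity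
  have hsq : (⌊v⌋₊ : ℝ) ^ 2 / Real.exp a ≤ 4 / a ^ 2 := by
    calc (⌊v⌋₊ : ℝ) ^ 2 / Real.exp a ≤ v ^ 2 / Real.exp a := by gcongr
      _ = 4 / a ^ 2 := by rw [hEE, hv]; field_simp; norm_num
  have : 2 / (Real.log (⌊v⌋₊ + 1) + 1 / 2) ≤ 2 / (a / 2 + Real.log 2 - Real.log a + 1 / 2) :=
    div_le_div_of_nonneg_left (by norm_num) hpos (by linarith)
  have h4 := mul_le_mul_of_nonneg_left (add_le_add this hsq) hR
  linarith

lemma gsum_claim (d : ℕ) (hd : 40 ≤ d) (n : ℕ) : ∀ L : ℝ, 12 ≤ L → L ≤ 14 + 2 * n →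
    gsum d (Real.exp L) ≤
      d / Nat.totient d * (2 * Real.log L - 4 / Real.sqrt L - 5.6 / L) := by
  have hR : (0 : ℝ) ≤ d / Nat.totient d := by positivity
  have l420 : Real.log 420 ≤ 12 := by
    rw [Real.log_le_iff_le_exp (by norm_num)]
    have := exp_half 24 (by norm_num)
    have h1 : Real.exp 12 = Real.exp 1 ^ 12 := by rw [← Real.exp_nat_mul]; norm_num
    have h2 : (2.7 : ℝ) ^ 12 ≤ Real.exp 1 ^ 12 :=
      pow_le_pow_left₀ (by norm_num) (by have := Real.exp_one_gt_d9; linarith) 12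
    rw [h1]; refine le_trans ?_ h2; norm_num
  have base : ∀ L : ℝ, 12 ≤ L → L ≤ 14 → gsum d (Real.exp L) ≤
      d / Nat.totient d * (2 * Real.log L - 4 / Real.sqrt L - 5.6 / L) := by
    intro L h1 h2
    exact (gsum_base d hd L (by linarith)).trans
      (mul_le_mul_of_nonneg_left (base_num L h1 h2) hR)
  induction n with
  | zero => intro L h1 h2; exact base L h1 (by simpa using h2)
  | succ n ih =>
    intro L h1 h2
    by_cases h14 : L ≤ 14
    · exact base L h1 h14
    push Not at h14
    push_cast at h2
    obtain ⟨a, rfl⟩ : ∃ a, L = a + 2 := ⟨L - 2, by ring⟩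
    have ha : 12 ≤ a := by linarith
    have i1 := ih a ha (by linarith)
    have i2 := gsum_step d hd a ha
    have i3 := mul_le_mul_of_nonneg_left (step_num a ha) hR
    have := add_le_add i1 i3
    rw [← mul_add] at this
    refine i2.trans ((add_le_add_left i1 _).trans ?_)
    rw [← mul_add]
    refine mul_le_mul_of_nonneg_left ?_ hR
    have := step_num a ha
    linarith

lemma gsum_loglog (d : ℕ) (hd : 40 ≤ d) (K : ℝ) (hK : 43 ≤ K) :
    gsum d K ≤ d / Nat.totient d * (2 * Real.log (Real.log K)) := by
  have hR : (0 : ℝ) ≤ d / Nat.totient d := by positivity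
  have l2a := Real.log_two_gt_d9
  have l2b := Real.log_two_lt_d9
  have hK0 : 0 < K := by linarith
  by_cases h420 : K ≤ 420
  · refine (gsum_mono d K 420 h420).trans ((gsum_420 d hd).trans ?_)
    refine mul_le_mul_of_nonneg_left ?_ hR
    have h1 : Real.exp 1 ≤ Real.log K := by
      have a1 := Real.exp_one_lt_d9
      have a2 : Real.log 43 ≤ Real.log K := Real.log_le_log (by norm_num) hK
      have a3 : (2.719 : ℝ) ≤ Real.log 43 := by
        have b1 : 2 * Real.log 43 = 11 * Real.log 2 - Real.log (2048 / 1849) := by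
          have a : Real.log ((43 : ℝ) ^ 2) = 2 * Real.log 43 := by rw [Real.log_pow]; norm_num
          have b : Real.log ((2 : ℝ) ^ 11) = 11 * Real.log 2 := by rw [Real.log_pow]; norm_num
          rw [← a, ← b, ← Real.log_div (by norm_num) (by norm_num)]
          norm_num
        have b2 := Real.log_le_sub_one_of_pos (show (0 : ℝ) < 2048 / 1849 by norm_num)
        norm_num at b2
        linarith
      linarith
    have h2 : 1 ≤ Real.log (Real.log K) := by
      rw [Real.le_log_iff_exp_le (by have := Real.exp_pos 1; linarith)]
      exact h1
    linarith
  push Not at h420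
  set L := Real.log K with hL
  have hKL : K = Real.exp L := (Real.exp_log hK0).symm
  have hL420 : Real.log 420 ≤ L := Real.log_le_log (by norm_num) h420.le
  have l420 := log420
  rw [hKL]
  by_cases h8 : L ≤ 8
  · refine (gsum_base d hd L hL420).trans (mul_le_mul_of_nonneg_left ?_ hR)
    have h6 : Real.log 6 ≤ Real.log L := Real.log_le_log (by norm_num) (by linarith)
    have h6' : 2 * Real.log 6 = 5 * Real.log 2 + Real.log (36 / 32) := by
      have a : Real.log ((6 : ℝ) ^ 2) = 2 * Real.log 6 := by rw [Real.log_pow]; norm_num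
      have b : Real.log ((2 : ℝ) ^ 5) = 5 * Real.log 2 := by rw [Real.log_pow]; norm_num
      rw [← a, ← b, ← Real.log_mul (by norm_num) (by norm_num)]
      norm_num
    have := Real.log_nonneg (show (1 : ℝ) ≤ 36 / 32 by norm_num)
    linarith
  push Not at h8
  by_cases h14 : L ≤ 14
  · refine (gsum_base d hd L hL420).trans (mul_le_mul_of_nonneg_left ?_ hR)
    have h6 : Real.log 8 ≤ Real.log L := Real.log_le_log (by norm_num) (by linarith)
    have b : Real.log ((2 : ℝ) ^ 3) = 3 * Real.log 2 := by rw [Real.log_pow]; norm_num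
    norm_num at b
    linarith
  push Not at h14
  obtain ⟨n, hn⟩ := exists_nat_ge L
  refine (gsum_claim d hd n L (by linarith) (by linarith)).trans (mul_le_mul_of_nonneg_left ?_ hR)
  have hL0 : 0 < L := by linarith
  have : 0 ≤ 4 / Real.sqrt L := by positivity
  have : 0 ≤ 5.6 / L := by positivity
  linarith

lemma ellp_dvd (a b p d : ℕ) (hb : b ≤ a) (hp : p.Prime) (hab : ¬ p ∣ a * b) (hd : 0 < d)
    (h : ellp a b p = d) : d ∣ p - 1 ∧ p ∣ a ^ d - b ^ d := by
  haveI := Fact.mk hp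
  have hmem : d ∈ {ℓ : ℕ | 0 < ℓ ∧ p ∣ a ^ ℓ - b ^ ℓ} := by
    rw [← h]
    apply Nat.sInf_mem
    by_contra hne
    rw [Set.not_nonempty_iff_eq_empty] at hne
    rw [ellp, hne, Nat.sInf_empty] at h
    omega
  have hmin : ∀ l : ℕ, 0 < l → p ∣ a ^ l - b ^ l → d ≤ l := by
    intro l h1 h2
    rw [← h]
    exact Nat.sInf_le ⟨h1, h2⟩
  have hb0 : (b : ZMod p) ≠ 0 := by
    rw [Ne, ZMod.natCast_eq_zero_iff]
    exact fun h => hab (Dvd.dvd.mul_left h a)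
  have ha0 : (a : ZMod p) ≠ 0 := by
    rw [Ne, ZMod.natCast_eq_zero_iff]
    exact fun h => hab (Dvd.dvd.mul_right h b)
  have key : ∀ l : ℕ, p ∣ a ^ l - b ^ l ↔ ((a : ZMod p) / b) ^ l = 1 := by
    intro l
    rw [← ZMod.natCast_eq_zero_iff, Nat.cast_sub (Nat.pow_le_pow_left hb l), sub_eq_zero, div_pow,
      div_eq_one_iff_eq (pow_ne_zero _ hb0)]
    push_cast
    rfl
  refine ⟨?_, hmem.2⟩
  have hu : ((a : ZMod p) / b) ≠ 0 := div_ne_zero ha0 hb0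
  have hfl := ZMod.pow_card_sub_one_eq_one hu
  have hod : orderOf ((a : ZMod p) / b) ∣ p - 1 := orderOf_dvd_of_pow_eq_one hfl
  have hpos : 0 < orderOf ((a : ZMod p) / b) :=
    Nat.pos_of_dvd_of_pos hod (by have := hp.two_le; omega)
  have h1 : d ≤ orderOf ((a : ZMod p) / b) := hmin _ hpos ((key _).2 (pow_orderOf_eq_one _))
  have h2 : orderOf ((a : ZMod p) / b) ∣ d := orderOf_dvd_of_pow_eq_one ((key _).1 hmem.2)
  have h3 := Nat.le_of_dvd hd h2
  have : d = orderOf ((a : ZMod p) / b) := by omega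
  rw [this]
  exact hod

lemma x_ge_three (x y z m n : ℕ) (hy : 0 < y) (hz : 0 < z)
    (hm : 40 ≤ m) (hn : 0 < n) (hxy : y < x) (hzxy : z ≤ x - y)
    (heq : Nat.totient (z * ((x ^ m - y ^ m) / (x - y))) =
      z * ((x ^ n - y ^ n) / (x - y))) : 3 ≤ x := by
  by_contra hlt
  have hx : x = 2 := by omega
  have hy1 : y = 1 := by omega
  subst hx; subst hy1
  have hz1 : z = 1 := by omega
  subst hz1
  simp only [one_pow, one_mul, Nat.add_one_sub_one, Nat.div_one] at heq
  have h4 : 2 ^ 2 ≤ 2 ^ m := Nat.pow_le_pow_right (by norm_num) (by omega)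
  have he := Nat.totient_even (n := 2 ^ m - 1) (by omega)
  rw [heq] at he
  obtain ⟨c, hc⟩ := he
  have h5 : 2 ^ n = 2 * 2 ^ (n - 1) := by
    rw [← pow_succ']; congr 1; omega
  have h6 : 0 < 2 ^ (n - 1) := by positivity
  omega

lemma tail_card (x d N : ℕ) (T : Finset ℕ) (hx : 3 ≤ x) (hd : 0 < d) (hN : N < x ^ d) (hN0 : 0 < N)
    (hT : ∀ p ∈ T, p.Prime ∧ p ∣ N ∧ d + 1 ≤ p) :
    (T.card : ℝ) * Real.log (d + 1) ≤ d * Real.log x := by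
  have h1 : ∏ p ∈ T, p ∣ N := Finset.prod_primes_dvd N (fun p hp => (hT p hp).1.prime)
    (fun p hp => (hT p hp).2.1)
  have h2 : (d + 1) ^ T.card ≤ ∏ p ∈ T, p :=
    Finset.pow_card_le_prod _ _ _ (fun p hp => (hT p hp).2.2)
  have h3 : (d + 1) ^ T.card ≤ x ^ d := (h2.trans (Nat.le_of_dvd hN0 h1)).trans hN.le
  have h4 : ((d : ℝ) + 1) ^ T.card ≤ (x : ℝ) ^ d := by exact_mod_cast h3
  have h5 := Real.log_le_log (by positivity) h4
  rwa [Real.log_pow, Real.log_pow] at h5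

theorem sum_reciprocal_primes_bound (x y z m n : ℕ) (hx : 0 < x) (hy : 0 < y) (hz : 0 < z)
    (hm : 0 < m) (hn : 0 < n) (hxy : y < x) (hzxy : z ≤ x - y)
    (hgcd : Nat.gcd m n = 1) (hmn : n < m)
    (heq : Nat.totient (z * ((x ^ m - y ^ m) / (x - y))) =
      z * ((x ^ n - y ^ n) / (x - y)))
    (d₁ x₁ y₁ : ℕ) (hd₁ : d₁ = Nat.gcd x y) (hx₁ : x₁ = x / d₁) (hy₁ : y₁ = y / d₁)
    (d : ℕ) (hd : d ∣ m) (hd40 : 40 ≤ d) :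
    ∑ p ∈ (Finset.range (x₁ ^ d - y₁ ^ d + 1)).filter
        (fun p => p.Prime ∧ Odd p ∧ ¬ p ∣ x₁ * y₁ ∧ ellp x₁ y₁ p = d),
      (1 : ℝ) / p <
      1 / (4 * d) + 1 / (d * Real.log (d + 1)) +
        2 * Real.log (Real.log d) / (Nat.totient d) +
        2 * Real.log (Real.log x) / (Nat.totient d * Real.log d) := by
  have hm40 : 40 ≤ m := hd40.trans (Nat.le_of_dvd hm hd)
  have hx3 := x_ge_three x y z m n hy hz hm40 hn hxy hzxy heq
  have hg0 : 0 < d₁ := by rw [hd₁]; exact Nat.gcd_pos_of_pos_left _ hx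
  have ex : x₁ * d₁ = x := by
    rw [hx₁]; exact Nat.div_mul_cancel (by rw [hd₁]; exact Nat.gcd_dvd_left x y)
  have ey : y₁ * d₁ = y := by
    rw [hy₁]; exact Nat.div_mul_cancel (by rw [hd₁]; exact Nat.gcd_dvd_right x y)
  have hxy1 : y₁ < x₁ := by
    by_contra h
    push Not at h
    have := Nat.mul_le_mul_right d₁ h
    omega
  have hy1 : 0 < y₁ := by
    rcases Nat.eq_zero_or_pos y₁ with h | h
    · rw [h] at ey; omega
    · exact h
  have hx1x : x₁ ≤ x := by rw [← ex]; exact Nat.le_mul_of_pos_right _ hg0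
  set N := x₁ ^ d - y₁ ^ d with hN
  have hd0 : 0 < d := by omega
  have hNlt : N < x ^ d := by
    have h1 : 0 < y₁ ^ d := by positivity
    have h2 : x₁ ^ d ≤ x ^ d := Nat.pow_le_pow_left hx1x d
    have h3 : 0 < x ^ d := by positivity
    omega
  have hNpos : 0 < N := Nat.sub_pos_of_lt (Nat.pow_lt_pow_left hxy1 (by omega))
  set S := (Finset.range (N + 1)).filter
        (fun p => p.Prime ∧ Odd p ∧ ¬ p ∣ x₁ * y₁ ∧ ellp x₁ y₁ p = d) with hS
  have hSmem : ∀ p ∈ S, p.Prime ∧ p ∣ N ∧ ∃ k, 0 < k ∧ p = k * d + 1 := by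
    intro p hp
    rw [hS, Finset.mem_filter] at hp
    obtain ⟨-, hpp, -, hnd, hell⟩ := hp
    obtain ⟨⟨k, hk⟩, h2⟩ := ellp_dvd x₁ y₁ p d hxy1.le hpp hnd hd0 hell
    have := hpp.two_le
    refine ⟨hpp, h2, k, ?_, ?_⟩
    · rcases Nat.eq_zero_or_pos k with h | h
      · rw [h] at hk; omega
      · exact h
    · rw [mul_comm]; omega
  -- real quantities
  have hdR : (40 : ℝ) ≤ d := by exact_mod_cast hd40
  have hxR : (3 : ℝ) ≤ x := by exact_mod_cast hx3
  have hlogx : (1.09 : ℝ) ≤ Real.log x := by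
    have h1 : Real.log 3 ≤ Real.log x := Real.log_le_log (by norm_num) hxR
    have h2 : 5 * Real.log 3 = 8 * Real.log 2 - Real.log (256 / 243) := by
      have a : Real.log ((3 : ℝ) ^ 5) = 5 * Real.log 3 := by rw [Real.log_pow]; norm_num
      have b : Real.log ((2 : ℝ) ^ 8) = 8 * Real.log 2 := by rw [Real.log_pow]; norm_num
      rw [← a, ← b, ← Real.log_div (by norm_num) (by norm_num)]
      norm_num
    have h3 := Real.log_le_sub_one_of_pos (show (0 : ℝ) < 256 / 243 by norm_num)
    have h4 := Real.log_two_gt_d9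
    norm_num at h3
    linarith
  have hlogd : 1 < Real.log d := by
    rw [Real.lt_log_iff_exp_lt (by linarith)]
    have := Real.exp_one_lt_d9
    linarith
  have hlogx0 : 0 < Real.log x := by linarith
  set K : ℝ := d * Real.log x with hK
  have hK43 : 43 ≤ K := by rw [hK]; nlinarith
  have hK0 : 0 < K := by linarith
  have hφ : (0 : ℝ) < Nat.totient d := by exact_mod_cast Nat.totient_pos.2 hd0
  have hdpos : (0 : ℝ) < d := by linarith
  rw [← Finset.sum_filter_add_sum_filter_not S (fun p => p ≤ ⌊K⌋₊ * d + 1)]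
  have part1 : ∑ p ∈ S.filter (fun p => p ≤ ⌊K⌋₊ * d + 1), (1 : ℝ) / p ≤
      2 * Real.log (Real.log d) / (Nat.totient d) +
        2 * Real.log (Real.log x) / (Nat.totient d * Real.log d) := by
    have h1 : ∑ p ∈ S.filter (fun p => p ≤ ⌊K⌋₊ * d + 1), (1 : ℝ) / p ≤ 1 / d * gsum d K := by
      rw [gsum, Finset.mul_sum]
      have hinj : Set.InjOn (fun k => k * d + 1)
          (((Finset.Ioc 0 ⌊K⌋₊).filter (fun k => (k * d + 1).Prime) : Finset ℕ) : Set ℕ) := by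
        intro a _ b _ hab
        simp only [add_left_inj] at hab
        exact Nat.eq_of_mul_eq_mul_right hd0 hab
      calc _ ≤ ∑ p ∈ ((Finset.Ioc 0 ⌊K⌋₊).filter (fun k => (k * d + 1).Prime)).image
            (fun k => k * d + 1), (1 : ℝ) / p := by
            refine Finset.sum_le_sum_of_subset_of_nonneg ?_ (fun _ _ _ => by positivity)
            intro p hp
            rw [Finset.mem_filter] at hp
            obtain ⟨hpp, -, k, hk, rfl⟩ := hSmem p hp.1
            refine Finset.mem_image.2 ⟨k, ?_, rfl⟩
            rw [Finset.mem_filter, Finset.mem_Ioc]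
            refine ⟨⟨hk, ?_⟩, hpp⟩
            exact Nat.le_of_mul_le_mul_right (by omega : k * d ≤ ⌊K⌋₊ * d) hd0
        _ = ∑ k ∈ (Finset.Ioc 0 ⌊K⌋₊).filter (fun k => (k * d + 1).Prime),
            (1 : ℝ) / ((k * d + 1 : ℕ) : ℝ) := Finset.sum_image hinj
        _ ≤ _ := by
            refine Finset.sum_le_sum fun k hk => ?_
            rw [Finset.mem_filter, Finset.mem_Ioc] at hk
            have hk0 : (0 : ℝ) < k := by exact_mod_cast hk.1.1
            rw [div_mul_div_comm, one_mul]
            apply div_le_div_of_nonneg_left (by norm_num) (by positivity)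
            push_cast
            linarith
    have h2 := gsum_loglog d hd40 K hK43
    have h3 : Real.log (Real.log K) ≤ Real.log (Real.log d) + Real.log (Real.log x) / Real.log d := by
      have e1 : Real.log K = Real.log d + Real.log (Real.log x) :=
        Real.log_mul hdpos.ne' hlogx0.ne'
      have hK1 : 0 < Real.log K := Real.log_pos (by linarith)
      have h := Real.log_le_sub_one_of_pos (show 0 < Real.log K / Real.log d by positivity)
      rw [Real.log_div hK1.ne' (by positivity)] at h
      have e2 : Real.log K / Real.log d - 1 = Real.log (Real.log x) / Real.log d := by
        rw [e1]; field_simp; ring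
      linarith
    calc _ ≤ 1 / d * gsum d K := h1
      _ ≤ 1 / d * (d / Nat.totient d * (2 * Real.log (Real.log K))) := by gcongr
      _ = 2 * Real.log (Real.log K) / Nat.totient d := by field_simp
      _ ≤ 2 * (Real.log (Real.log d) + Real.log (Real.log x) / Real.log d) / Nat.totient d := by
        gcongr
      _ = _ := by field_simp
  have part2 : ∑ p ∈ S.filter (fun p => ¬ p ≤ ⌊K⌋₊ * d + 1), (1 : ℝ) / p ≤
      1 / (d * Real.log (d + 1)) := by
    set T := S.filter (fun p => ¬ p ≤ ⌊K⌋₊ * d + 1) with hT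
    have hld : 0 < Real.log ((d : ℝ) + 1) := Real.log_pos (by linarith)
    have hcard := tail_card x d N T hx3 hd0 hNlt hNpos (by
      intro p hp
      rw [hT, Finset.mem_filter] at hp
      obtain ⟨h1, h2, k, hk, rfl⟩ := hSmem p hp.1
      refine ⟨h1, h2, ?_⟩
      have := Nat.le_mul_of_pos_left d hk
      omega)
    have hb : ∀ p ∈ T, (1 : ℝ) / p ≤ 1 / (d * K) := by
      intro p hp
      rw [hT, Finset.mem_filter] at hp
      obtain ⟨h1, h2, k, hk, rfl⟩ := hSmem p hp.1
      have hlt : ⌊K⌋₊ < k := by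
        by_contra hc
        push Not at hc
        have := Nat.mul_le_mul_right d hc
        omega
      have hKk : K < k := (Nat.floor_lt hK0.le).1 hlt
      apply div_le_div_of_nonneg_left (by norm_num) (by positivity)
      push_cast
      nlinarith
    have hs := Finset.sum_le_card_nsmul T _ _ hb
    refine hs.trans ?_
    rw [nsmul_eq_mul, mul_one_div, div_le_div_iff₀ (by positivity) (by positivity)]
    rw [← hK] at hcard
    nlinarith
  have : (0 : ℝ) < 1 / (4 * d) := by positivity
  linarith
end

section
/- For all real numbers x₁, x₂ with x₁ ≥ 78 and x₂ ≥ 78, one has log log(x₁·x₂) ≤ (log log x₁)·(log log x₂); that is, the function log log is sub-multiplicative on [78, ∞). -/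
lemma log78_lower : (4.356 : ℝ) ≤ Real.log 78 := by
  have h : Real.log 78 = 6 * Real.log 2 + Real.log (1 + 0.21875) := by
    rw [show (78 : ℝ) = 2 ^ 6 * (1 + 0.21875) by norm_num,
      Real.log_mul (by norm_num) (by norm_num), Real.log_pow]
    norm_num
  have h1 := Real.le_log_one_add_of_nonneg (x := 0.21875) (by norm_num)
  have h2 := Real.log_two_gt_d9
  norm_num at h h1 h2 ⊢
  linarith

lemma loglog_lower (x : ℝ) (hx : 78 ≤ x) : (1.4714 : ℝ) ≤ Real.log (Real.log x) := by
  have h0 : (4.356 : ℝ) ≤ Real.log x :=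
    log78_lower.trans (Real.log_le_log (by norm_num) hx)
  have h3 : Real.log 4.356 ≤ Real.log (Real.log x) := Real.log_le_log (by norm_num) h0
  have h : Real.log 4.356 = 2 * Real.log 2 + Real.log (1 + 0.089) := by
    rw [show (4.356 : ℝ) = 2 ^ 2 * (1 + 0.089) by norm_num,
      Real.log_mul (by norm_num) (by norm_num), Real.log_pow]
    norm_num
  have h1 := Real.le_log_one_add_of_nonneg (x := 0.089) (by norm_num)
  have h2 := Real.log_two_gt_d9
  norm_num at h h1 h2 h3 ⊢
  linarith

lemma loglog_aux (x y : ℝ) (h1 : 78 ≤ x) (h2 : 78 ≤ y) (hxy : x ≤ y) :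
    Real.log (Real.log (x * y)) ≤ Real.log (Real.log x) * Real.log (Real.log y) := by
  have hx := log78_lower.trans (Real.log_le_log (by norm_num) h1)
  have hy := log78_lower.trans (Real.log_le_log (by norm_num) h2)
  have hle : Real.log x ≤ Real.log y := Real.log_le_log (by linarith) hxy
  have hL := loglog_lower x h1
  have hM := loglog_lower y h2
  have key : Real.log (Real.log (x * y)) ≤ Real.log 2 + Real.log (Real.log y) := by
    have hx0 : x ≠ 0 := by intro h; linarith
    have hy0 : y ≠ 0 := by intro h; linarith
    have hly : Real.log y ≠ 0 := by intro h; linarith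
    rw [Real.log_mul hx0 hy0, ← Real.log_mul (two_ne_zero) hly]
    exact Real.log_le_log (by linarith) (by linarith)
  have h2 := Real.log_two_lt_d9
  nlinarith [mul_nonneg (sub_nonneg.2 hL) (sub_nonneg.2 hM)]

theorem loglog_submultiplicative (x₁ x₂ : ℝ) (h1 : 78 ≤ x₁) (h2 : 78 ≤ x₂) :
    Real.log (Real.log (x₁ * x₂)) ≤
      Real.log (Real.log x₁) * Real.log (Real.log x₂) := by
  rcases le_total x₁ x₂ with h | h
  · exact loglog_aux x₁ x₂ h1 h2 h
  · rw [mul_comm x₁, mul_comm (Real.log (Real.log x₁))]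
    exact loglog_aux x₂ x₁ h2 h1 h
end

section
/- Under the standing assumptions, assume further x ≤ 80. If q is a prime divisor of m, then q does not divide x₁ − y₁. -/
/-- The homogeneous geometric sum `(x^k - y^k)/(x - y)`. -/
def BB (x y k : ℕ) : ℕ := ∑ i ∈ Finset.range k, x ^ i * y ^ (k - 1 - i)

theorem BB_mul (x y k : ℕ) (h : y < x) : BB x y k * (x - y) = x ^ k - y ^ k :=
  geom_sum₂_mul_of_ge h.le k

theorem BB_div (x y k : ℕ) (h : y < x) : (x ^ k - y ^ k) / (x - y) = BB x y k := by
  rw [← BB_mul x y k h]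
  exact Nat.mul_div_cancel _ (by omega)

theorem BB_scale (d x y k : ℕ) : BB (d * x) (d * y) k = d ^ (k - 1) * BB x y k := by
  unfold BB
  rw [Finset.mul_sum]
  apply Finset.sum_congr rfl
  intro i hi
  have hi := Finset.mem_range.mp hi
  have : k - 1 = i + (k - 1 - i) := by omega
  rw [mul_pow, mul_pow]
  conv_rhs => rw [this, pow_add]
  have h2 : i + (k - 1 - i) - i = k - 1 - i := by omega
  rw [h2]
  ring

theorem BB_cong (x y k p : ℕ) (h : y < x) (hp : p ∣ x - y) :
    ((BB x y k : ℕ) : ZMod p) = k * (x : ZMod p) ^ (k - 1) := by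
  have hxy : (x : ZMod p) = y := by
    have := (ZMod.natCast_eq_zero_iff (x - y) p).mpr hp
    rw [Nat.cast_sub h.le] at this
    exact sub_eq_zero.mp this
  unfold BB
  push_cast
  rw [← hxy]
  rw [Finset.sum_congr rfl (g := fun _ => (x : ZMod p) ^ (k - 1))]
  · simp
  · intro i hi
    have hi := Finset.mem_range.mp hi
    rw [← pow_add]
    congr 1
    omega

theorem BB_dvd (x y k l : ℕ) (h : y < x) (hkl : k ∣ l) : BB x y k ∣ BB x y l := by
  have h1 : x ^ k - y ^ k ∣ x ^ l - y ^ l := by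
    obtain ⟨c, rfl⟩ := hkl
    rw [pow_mul, pow_mul]
    exact Nat.sub_dvd_pow_sub_pow _ _ _
  rw [← BB_mul x y k h, ← BB_mul x y l h] at h1
  exact Nat.dvd_of_mul_dvd_mul_right (by omega) h1

theorem BB_gt (x y k : ℕ) (hy : 0 < y) (h : y < x) (hk : 2 ≤ k) : k < BB x y k := by
  unfold BB
  have h1 : ∑ i ∈ Finset.range k, 1 < ∑ i ∈ Finset.range k, x ^ i * y ^ (k - 1 - i) := by
    apply Finset.sum_lt_sum
    · intro i _
      exact Nat.succ_le_of_lt (Nat.mul_pos (Nat.pow_pos (by omega)) (Nat.pow_pos hy))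
    · refine ⟨1, Finset.mem_range.mpr (by omega), ?_⟩
      have : 1 ≤ y ^ (k - 1 - 1) := Nat.pow_pos hy
      rw [pow_one]
      nlinarith
  simpa using h1

theorem BB_rank (x y q r : ℕ) (hxy : y < x) (hc : Nat.Coprime x y) (hq : q.Prime)
    (hr : r.Prime) (hrq : r ≠ q) (hd : r ∣ BB x y q) : q ∣ r - 1 := by
  haveI := Fact.mk hr
  haveI := Fact.mk hq
  have hpow : (x : ZMod r) ^ q = (y : ZMod r) ^ q := by
    have h1 : r ∣ x ^ q - y ^ q := by
      rw [← BB_mul x y q hxy]; exact Dvd.dvd.mul_right hd _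
    have h2 := (ZMod.natCast_eq_zero_iff _ r).mpr h1
    rw [Nat.cast_sub (Nat.pow_le_pow_left hxy.le q)] at h2
    push_cast at h2
    exact sub_eq_zero.mp h2
  have hx0 : (x : ZMod r) ≠ 0 := by
    intro h0
    have hy0 : (y : ZMod r) = 0 := by
      rw [h0, zero_pow hq.ne_zero] at hpow
      exact pow_eq_zero_iff hq.ne_zero |>.mp hpow.symm
    have a := (ZMod.natCast_eq_zero_iff _ r).mp h0
    have b := (ZMod.natCast_eq_zero_iff _ r).mp hy0
    exact Nat.not_coprime_of_dvd_of_dvd hr.one_lt a b hc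
  have hy0 : (y : ZMod r) ≠ 0 := by
    intro h0
    rw [h0, zero_pow hq.ne_zero] at hpow
    exact hx0 (pow_eq_zero_iff hq.ne_zero |>.mp hpow)
  have hne : (x : ZMod r) ≠ y := by
    intro h
    have hdv : r ∣ x - y := by
      apply (ZMod.natCast_eq_zero_iff _ r).mp
      rw [Nat.cast_sub hxy.le, h, sub_self]
    have hB := BB_cong x y q r hxy hdv
    rw [(ZMod.natCast_eq_zero_iff _ r).mpr hd] at hB
    have hq0 : (q : ZMod r) = 0 := by
      rcases mul_eq_zero.mp hB.symm with h | h
      · exact h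
      · exact absurd h (pow_ne_zero _ hx0)
    have := (ZMod.natCast_eq_zero_iff _ r).mp hq0
    exact hrq ((Nat.prime_dvd_prime_iff_eq hr hq).mp this)
  have ho : orderOf ((x : ZMod r) / y) = q := by
    apply orderOf_eq_prime
    · rw [div_pow, hpow, div_self (pow_ne_zero _ hy0)]
    · intro h
      exact hne ((div_eq_one_iff_eq hy0).mp h)
  rw [← ho]
  exact ZMod.orderOf_dvd_card_sub_one (div_ne_zero hx0 hy0)

theorem prime_dvd_m_not_dvd_sub (x y z m n : ℕ) (hx : 0 < x) (hy : 0 < y) (hz : 0 < z)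
    (hm : 0 < m) (hn : 0 < n) (hxy : y < x) (hzxy : z ≤ x - y)
    (hgcd : Nat.gcd m n = 1) (hmn : n < m)
    (heq : Nat.totient (z * ((x ^ m - y ^ m) / (x - y))) =
      z * ((x ^ n - y ^ n) / (x - y)))
    (hx80 : x ≤ 80)
    (d₁ x₁ y₁ : ℕ) (hd₁ : d₁ = Nat.gcd x y) (hx₁ : x₁ = x / d₁) (hy₁ : y₁ = y / d₁)
    (q : ℕ) (hq : q.Prime) (hqm : q ∣ m) :
    ¬ q ∣ x₁ - y₁ := by
  intro hqd
  haveI := Fact.mk hq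
  have hd0 : 0 < d₁ := hd₁ ▸ Nat.gcd_pos_of_pos_left _ hx
  have hxe : x = d₁ * x₁ := by
    rw [hx₁, Nat.mul_div_cancel' (hd₁ ▸ Nat.gcd_dvd_left x y)]
  have hye : y = d₁ * y₁ := by
    rw [hy₁, Nat.mul_div_cancel' (hd₁ ▸ Nat.gcd_dvd_right x y)]
  have hc : Nat.Coprime x₁ y₁ := by
    rw [hx₁, hy₁, hd₁]
    exact Nat.coprime_div_gcd_div_gcd (hd₁ ▸ hd0)
  have hlt : y₁ < x₁ := by
    rw [hxe, hye] at hxy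
    exact Nat.lt_of_mul_lt_mul_left hxy
  have hy0 : 0 < y₁ := by
    rcases Nat.eq_zero_or_pos y₁ with h | h
    · rw [h] at hye; omega
    · exact h
  rw [BB_div x y m hxy, BB_div x y n hxy, hxe, hye, BB_scale, BB_scale] at heq
  -- q does not divide B_n
  have hqx : ¬ q ∣ x₁ := by
    intro h
    have : q ∣ y₁ := (Nat.dvd_sub_iff_right hlt.le h).mp hqd
    exact Nat.not_coprime_of_dvd_of_dvd hq.one_lt h this hc
  have hqn : ¬ q ∣ n := by
    intro h
    exact Nat.not_coprime_of_dvd_of_dvd hq.one_lt hqm h hgcd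
  have hBn : ¬ q ∣ BB x₁ y₁ n := by
    intro h
    have e := BB_cong x₁ y₁ n q hlt hqd
    rw [(ZMod.natCast_eq_zero_iff _ q).mpr h] at e
    rcases mul_eq_zero.mp e.symm with h | h
    · exact hqn ((ZMod.natCast_eq_zero_iff _ q).mp h)
    · exact hqx ((ZMod.natCast_eq_zero_iff _ q).mp (eq_zero_of_pow_eq_zero h))
  have hBq : q ∣ BB x₁ y₁ q := by
    apply (ZMod.natCast_eq_zero_iff _ q).mp
    rw [BB_cong x₁ y₁ q q hlt hqd]
    simp
  have hBqm := BB_dvd x₁ y₁ q m hlt hqm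
  have hM0 : z * d₁ ^ (m - 1) ≠ 0 := by positivity
  obtain ⟨v, w, hw, hM⟩ := Nat.exists_eq_pow_mul_and_not_dvd hM0 q hq.ne_one
  rw [← mul_assoc, ← mul_assoc] at heq
  have key : q ^ (v + 1) ∣ Nat.totient (z * d₁ ^ (m - 1) * BB x₁ y₁ m) := by
    by_cases h2 : q ^ 2 ∣ BB x₁ y₁ m
    · have h3 : q ^ (v + 2) ∣ z * d₁ ^ (m - 1) * BB x₁ y₁ m := by
        rw [pow_add]
        exact mul_dvd_mul (hM ▸ Dvd.intro _ rfl) h2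
      have h4 := Nat.totient_dvd_of_dvd h3
      rw [Nat.totient_prime_pow_succ hq] at h4
      exact (Dvd.intro _ rfl).trans h4
    · obtain ⟨t, ht⟩ := hBq
      have hgt := BB_gt x₁ y₁ q hy0 hlt hq.two_le
      have ht1 : t ≠ 1 := by
        rintro rfl
        omega
      obtain ⟨r, hr, hrt⟩ := Nat.exists_prime_and_dvd ht1
      have hrq : r ≠ q := by
        rintro rfl
        apply h2
        refine dvd_trans ?_ hBqm
        rw [ht, pow_two]
        exact Nat.mul_dvd_mul_left _ hrt
      have hqr := BB_rank x₁ y₁ q r hlt hc hq hr hrq (ht ▸ Dvd.dvd.mul_left hrt q)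
      have h3 : q ^ (v + 1) * r ∣ z * d₁ ^ (m - 1) * BB x₁ y₁ m := by
        rw [pow_succ, mul_assoc]
        refine mul_dvd_mul (hM ▸ Dvd.intro _ rfl) (dvd_trans ?_ hBqm)
        rw [ht]
        exact Nat.mul_dvd_mul_left _ hrt
      have h4 := Nat.totient_dvd_of_dvd h3
      have hco : Nat.Coprime (q ^ (v + 1)) r :=
        Nat.Coprime.pow_left _ ((Nat.coprime_primes hq hr).mpr hrq.symm)
      rw [Nat.totient_mul hco, Nat.totient_prime_pow_succ hq, Nat.totient_prime hr] at h4
      refine dvd_trans ?_ h4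
      rw [pow_succ]
      exact mul_dvd_mul (Dvd.intro _ rfl) hqr
  rw [heq] at key
  have hco : Nat.Coprime (q ^ (v + 1)) (BB x₁ y₁ n) :=
    Nat.Coprime.pow_left _ ((Nat.Prime.coprime_iff_not_dvd hq).mpr hBn)
  have k2 := hco.dvd_of_dvd_mul_right key
  have k3 : q ^ (v + 1) ∣ z * d₁ ^ (m - 1) :=
    k2.trans (Nat.mul_dvd_mul_left _ (pow_dvd_pow _ (by omega)))
  rw [hM, pow_succ] at k3
  exact hw (Nat.dvd_of_mul_dvd_mul_left (Nat.pow_pos hq.pos) k3)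
end
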